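/- arXiv:1602.08643 — 2 statements merged into one kernel-verified Lean document; each statement's English description precedes it below -/
import Mathlib

section
/- Under the stated assumptions, the thermodynamic limit of the defect-formation free energy exists and is given by G_∞(A) = −log( (∫_ℝ exp(−(ψ+P)(y) + W'(A)·y) dy) / (∫_ℝ exp(−ψ(y) + W'(A)·y) dy) ), and moreover for every A ∈ ℝ there is a constant C > 0 such that |G_N(A) − G_∞(A)| ≤ C/N for all integers N ≥ 2. -/
/-!
Let `σ` be the tilt for which the density proportional to `exp (-ψ y + σ y)` has mean `A`. A
Legendre-transform computation (`hasDerivAt_W`) shows `W' (A) = σ`: the cumulant generating function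
lies above a parabola (`tilt_lower`), so `W` is squeezed between its tangent and a parabola at `A`.
Let `φ` be that density, recentred at `0`, with variance `v`, and let `k` be the analogous unnormalised
weight for `ψ + P`. Integrating out all atoms but the first
(`partition_function`) writes both partition functions as integrals against the `(N-1)`-fold
convolution power `f` of `φ`, so that, up to an explicit constant, the defect-formation free energy is
`-log` of the ratio `(∫ k x f(-x)) / (∫ φ x f(-x))`. It remains to prove that this ratio is
`∫ k + O(1/N)` (`core`); no local limit theorem is needed.

* The log-concavity of `φ` passes to `f` by the Cauchy–Binet formula (`cv_tp`), and the bound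
  `(-log φ)'' ≤ κ₂` improves to `(-log f)'' ≤ κ₂ / (N-1)` by Cauchy–Schwarz (`cv_semi`). Both are
  expressed by second differences, in `GoodDensity`.
* Hence `log f` is affine near `0` up to `O(1/N)`, and comparing the mass of `f` with that of its
  translates by `±√N` shows that its slope at `0` is `O(1/√N)` (`slope_bound`). Therefore
  `f x = f 0 * (1 + l x + O(1/N))` with an exponentially growing weight in `x` (`expand`).
* The slope `l` contributes to the numerator at the order `1/√N` only through the first moment of `k`.
  Subtracting from `k` a multiple of `x φ x` removes this moment, and the subtracted term
  `∫ x φ x f(-x)` vanishes exactly: by exchangeability each increment has mean `0` given that the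
  sum of all increments is `0` (`BondDensity.exchange`).
-/

noncomputable section

open MeasureTheory Real Filter

/-- Extend interior degrees of freedom `u : ℝ^(n-1)` to the whole chain via the
boundary conditions `u 0 = 0` and `u n = b`. -/
def bc (n : ℕ) (b : ℝ) (u : Fin (n - 1) → ℝ) : ℕ → ℝ := fun i =>
  if h : 0 < i ∧ i < n then u ⟨i - 1, by omega⟩ else if i = 0 then 0 else b

/-- The chain energy `∑_{i=1}^n φ_i (u_i - u_{i-1})` with boundary conditions
`u 0 = 0`, `u n = b`. -/
def chainE (φ : ℕ → ℝ → ℝ) (n : ℕ) (b : ℝ) (u : Fin (n - 1) → ℝ) : ℝ :=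
  ∑ i ∈ Finset.range n, φ (i + 1) (bc n b u (i + 1) - bc n b u i)

/-- The free energy `-log ∫_{ℝ^{N-1}} exp(-∑ φ_i(u_i - u_{i-1}) - defect(u₁)) du`,
with `u 0 = 0`, `u N = N A`. -/
def freeEnergy (φ : ℕ → ℝ → ℝ) (defect : ℝ → ℝ) (N : ℕ) (A : ℝ) : ℝ :=
  - Real.log (∫ u : Fin (N - 1) → ℝ,
      Real.exp (-(chainE φ N (N * A) u) - defect (bc N (N * A) u 1)))

/-- The Cauchy–Born strain energy `W(A)`. -/
def W (ψ : ℝ → ℝ) (A : ℝ) : ℝ :=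
  ⨆ σ : ℝ, (σ * A - Real.log (∫ y : ℝ, Real.exp (-ψ y + σ * y)))

/-! ### Convolution of real functions -/

/-- The convolution `φ * f` of two real functions, as a plain integral. -/
def cv (φ f : ℝ → ℝ) (x : ℝ) : ℝ := ∫ y, φ y * f (x - y)

lemma cv_swap (φ f : ℝ → ℝ) (x : ℝ) : cv φ f x = ∫ y, φ (x - y) * f y := by
  unfold cv
  rw [← integral_sub_left_eq_self _ volume x]
  simp

lemma cv_eq_convolution (φ f : ℝ → ℝ) :
    cv φ f = MeasureTheory.convolution φ f (ContinuousLinearMap.mul ℝ ℝ) volume := by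
  ext x
  simp [cv, convolution_def]

lemma cv_integrable {φ f : ℝ → ℝ} (hφ : Integrable φ) (hf : Integrable f) :
    Integrable (cv φ f) := by
  rw [cv_eq_convolution]
  exact hφ.integrable_convolution _ hf

lemma cv_integral {φ f : ℝ → ℝ} (hφ : Integrable φ) (hf : Integrable f) :
    ∫ x, cv φ f x = (∫ x, φ x) * ∫ x, f x := by
  rw [cv_eq_convolution, integral_convolution _ hφ hf]
  simp

lemma MeasureTheory.Integrable.sub_fun {f g : ℝ → ℝ} (hf : Integrable f)
    (hg : Integrable g) : Integrable (fun x => f x - g x) :=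
  hf.sub hg

lemma integrable_mul_of_bdd {g f : ℝ → ℝ} (hf : Integrable f) (hg : Continuous g) {B : ℝ}
    (hB : ∀ x, |g x| ≤ B) : Integrable (fun x => g x * f x) :=
  hf.bdd_mul hg.aestronglyMeasurable (ae_of_all _ (by simpa using hB))

lemma integrable_refl_of_bdd {g f : ℝ → ℝ} (hf : Integrable f) (hg : Continuous g) {B : ℝ}
    (hB : ∀ x, |g x| ≤ B) (x : ℝ) : Integrable (fun y => g y * f (x - y)) :=
  integrable_mul_of_bdd (hf.comp_sub_left x) hg hB

lemma integrable_refl_of_bdd' {g f : ℝ → ℝ} (hg : Integrable g) (hf : Continuous f) {B : ℝ}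
    (hB : ∀ x, |f x| ≤ B) (x : ℝ) : Integrable (fun y => g y * f (x - y)) := by
  have := integrable_mul_of_bdd (g := fun y => f (x - y)) hg (by fun_prop) (fun y => hB _)
  simpa [mul_comm] using this

/-! ### Densities stable under convolution -/

/-- A probability density on `ℝ` with mean `0` and variance `v` which is log-concave (condition
`tp`, total positivity of order two) and whose logarithm has second differences bounded below
by `-c h²` (condition `semi`). -/
structure GoodDensity (c v : ℝ) (f : ℝ → ℝ) : Prop where
  pos : ∀ x, 0 < f x
  diff : Differentiable ℝ f
  bdd : ∃ B, ∀ x, |f x| ≤ B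
  int0 : Integrable f
  int1 : Integrable (fun x => x * f x)
  int2 : Integrable (fun x => x ^ 2 * f x)
  m0 : ∫ x, f x = 1
  m1 : ∫ x, x * f x = 0
  m2 : ∫ x, x ^ 2 * f x = v
  tp : ∀ x u w, 0 ≤ u → 0 ≤ w → f x * f (x + u + w) ≤ f (x + u) * f (x + w)
  semi : ∀ x h, f x ^ 2 * exp (-c * h ^ 2) ≤ f (x + h) * f (x - h)

/-- The continuous Cauchy–Binet (Andréief) identity for `2 × 2` determinants, used as an
inequality. -/
lemma andreief {p p' r r' : ℝ → ℝ} (h1 : Integrable (fun y => p y * r y))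
    (h2 : Integrable (fun y => p' y * r' y)) (h3 : Integrable (fun y => p y * r' y))
    (h4 : Integrable (fun y => p' y * r y))
    (hnn : ∀ y z, 0 ≤ (p y * p' z - p z * p' y) * (r y * r' z - r z * r' y)) :
    (∫ y, p y * r' y) * (∫ y, p' y * r y) ≤ (∫ y, p y * r y) * ∫ y, p' y * r' y := by
  have i1 := h1.mul_prod (ν := volume) h2
  have i2 := h2.mul_prod (ν := volume) h1
  have i3 := h3.mul_prod (ν := volume) h4
  have i4 := h4.mul_prod (ν := volume) h3
  have key : 0 ≤ ∫ z : ℝ × ℝ, (p z.1 * p' z.2 - p z.2 * p' z.1) *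
      (r z.1 * r' z.2 - r z.2 * r' z.1) ∂(volume.prod volume) :=
    integral_nonneg fun z => hnn z.1 z.2
  have e : (fun z : ℝ × ℝ => (p z.1 * p' z.2 - p z.2 * p' z.1) *
      (r z.1 * r' z.2 - r z.2 * r' z.1)) = fun z =>
      (((p z.1 * r z.1) * (p' z.2 * r' z.2)) + (p' z.1 * r' z.1) * (p z.2 * r z.2)) -
      (((p z.1 * r' z.1) * (p' z.2 * r z.2)) + (p' z.1 * r z.1) * (p z.2 * r' z.2)) := by
    ext z; ring
  rw [e, integral_sub (i1.fun_add i2) (i3.fun_add i4), integral_add i1 i2, integral_add i3 i4,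
    integral_prod_mul (fun y => p y * r y) (fun y => p' y * r' y),
    integral_prod_mul (fun y => p' y * r' y) (fun y => p y * r y),
    integral_prod_mul (fun y => p y * r' y) (fun y => p' y * r y),
    integral_prod_mul (fun y => p' y * r y) (fun y => p y * r' y)] at key
  linarith

/-- Cauchy–Schwarz in the form: `D² ≤ A B` pointwise implies `(∫ D)² ≤ ∫ A ∫ B`. -/
lemma sq_integral_le {A B D : ℝ → ℝ} (hA : Integrable A) (hB : Integrable B) (hD : Integrable D)
    (A0 : ∀ x, 0 ≤ A x) (B0 : ∀ x, 0 ≤ B x) (iA : 0 < ∫ x, A x) (iB : 0 < ∫ x, B x)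
    (h : ∀ x, D x ^ 2 ≤ A x * B x) (D0 : ∀ x, 0 ≤ D x) :
    (∫ x, D x) ^ 2 ≤ (∫ x, A x) * ∫ x, B x := by
  set a := ∫ x, A x
  set b := ∫ x, B x
  have h1 : ∫ x, 2 * √(a * b) * D x ≤ ∫ x, (b * A x + a * B x) := by
    refine integral_mono (hD.const_mul _) ((hA.const_mul _).add (hB.const_mul _)) fun x => ?_
    refine abs_le_of_sq_le_sq' ?_ (by have := A0 x; have := B0 x; positivity) |>.2
    have : √(a * b) ^ 2 = a * b := sq_sqrt (by positivity)
    calc (2 * √(a * b) * D x) ^ 2 = 4 * (a * b) * D x ^ 2 := by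
          rw [mul_pow, mul_pow, this]; ring
      _ ≤ 4 * (a * b) * (A x * B x) := by have := h x; gcongr
      _ ≤ _ := by nlinarith [sq_nonneg (b * A x - a * B x)]
  rw [integral_const_mul, integral_add (hA.const_mul _) (hB.const_mul _), integral_const_mul,
    integral_const_mul] at h1
  have h2 : √(a * b) * √(a * b) = a * b := mul_self_sqrt (by positivity)
  have h3 : 0 < √(a * b) := sqrt_pos.2 (by positivity)
  have h4 : ∫ x, D x ≤ √(a * b) := by
    change 2 * √(a * b) * _ ≤ b * a + a * b at h1
    nlinarith
  have h5 : 0 ≤ ∫ x, D x := integral_nonneg D0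
  nlinarith

lemma integral_pos_of_pos {f : ℝ → ℝ} (hf : Integrable f) (h : ∀ x, 0 < f x) :
    0 < ∫ x, f x := by
  rw [integral_pos_iff_support_of_nonneg (fun x => (h x).le) hf]
  have : Function.support f = Set.univ := by
    ext x; simp [(h x).ne']
  simp [this]

section step
variable {a c v v' : ℝ} {φ f : ℝ → ℝ}

/-- Convolution preserves log-concavity: Cauchy–Binet turns the total positivity of the two factors
into that of their convolution. -/
lemma cv_tp (hφ : GoodDensity a v φ) (hf : GoodDensity c v' f) (x u w : ℝ) (hu : 0 ≤ u)
    (hw : 0 ≤ w) : cv φ f x * cv φ f (x + u + w) ≤ cv φ f (x + u) * cv φ f (x + w) := by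
  obtain ⟨B, hB⟩ := hφ.bdd
  have hc := hφ.diff.continuous
  have int : ∀ s t, Integrable fun y => φ (s - y) * f (y - t) := fun s t =>
    integrable_mul_of_bdd (hf.int0.comp_sub_right t) (by fun_prop) (fun y => hB _)
  have e : ∀ s t, ∫ y, φ (s - y) * f (y - t) = cv φ f (s - t) := by
    intro s t
    rw [cv_swap, ← integral_sub_right_eq_self (fun y => φ (s - t - y) * f y) t]
    congr 1; ext y; congr 2; ring
  have tp2 : ∀ {g : ℝ → ℝ} {d : ℝ} {e : ℝ}, GoodDensity d e g → ∀ p q r s, p ≤ q → p ≤ r →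
      q + r = p + s → g p * g s ≤ g q * g r := by
    intro g d e hg p q r s h1 h2 h3
    have := hg.tp p (q - p) (r - p) (by linarith) (by linarith)
    have e1 : p + (q - p) + (r - p) = s := by linarith
    rw [e1] at this
    simpa using this
  have := andreief (p := fun y => φ (x + u - y)) (p' := fun y => φ (x + u + w - y))
    (r := fun y => f (y - 0)) (r' := fun y => f (y - u)) (int _ _) (int _ _) (int _ _) (int _ _) ?_
  · rw [e, e, e, e] at this
    convert this using 3 <;> ring_nf
  · intro y z
    rcases le_total y z with h | h
    · have h1 := tp2 hφ (x + u - z) (x + u - y) (x + u + w - z) (x + u + w - y) (by linarith)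
        (by linarith) (by ring)
      have h2 := tp2 hf (y - u) (y - 0) (z - u) (z - 0) (by linarith) (by linarith) (by ring)
      apply mul_nonneg <;> linarith
    · have h1 := tp2 hφ (x + u - y) (x + u - z) (x + u + w - y) (x + u + w - z) (by linarith)
        (by linarith) (by ring)
      have h2 := tp2 hf (z - u) (z - 0) (y - u) (y - 0) (by linarith) (by linarith) (by ring)
      apply mul_nonneg_of_nonpos_of_nonpos <;> linarith

lemma cv_pos (hφ : GoodDensity a v φ) (hf : GoodDensity c v' f) (x : ℝ) : 0 < cv φ f x := by
  obtain ⟨B, hB⟩ := hφ.bdd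
  exact integral_pos_of_pos (integrable_refl_of_bdd hf.int0 hφ.diff.continuous hB x)
    fun y => mul_pos (hφ.pos _) (hf.pos _)

/-- Convolution improves the semi-convexity constant of `-log` harmonically, from `a` and `c` to
`a c / (a + c)`: the shift `h` is distributed over the two factors and Cauchy–Schwarz is applied. -/
lemma cv_semi (hφ : GoodDensity a v φ) (hf : GoodDensity c v' f) (ha : 0 < a) (hc : 0 < c)
    (x h : ℝ) : cv φ f x ^ 2 * exp (-(a * c / (a + c)) * h ^ 2) ≤
      cv φ f (x + h) * cv φ f (x - h) := by
  obtain ⟨B, hB⟩ := hφ.bdd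
  -- the shift `h` is split between the two factors in the proportion `c : a`
  obtain ⟨θ, hθ⟩ : ∃ θ, θ = c / (a + c) := ⟨_, rfl⟩
  have hθ' : a * θ ^ 2 + c * (1 - θ) ^ 2 = a * c / (a + c) := by
    rw [hθ]; field_simp; ring
  have e : ∀ k, cv φ f (x + k) = ∫ y, φ (y + θ * k) * f (x - y + (1 - θ) * k) := by
    intro k
    unfold cv
    rw [← integral_add_right_eq_self _ (θ * k)]
    congr 1; ext y; congr 2; ring
  have hcont := hφ.diff.continuous
  have int : ∀ k, Integrable fun y => φ (y + θ * k) * f (x - y + (1 - θ) * k) := by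
    intro k
    have := integrable_mul_of_bdd (g := fun y => φ (y + θ * k))
      (hf.int0.comp_sub_left (x + (1 - θ) * k)) (by fun_prop) (fun y => hB _)
    refine this.congr (ae_of_all _ fun y => ?_)
    simp only []
    congr 2; ring
  have e0 : cv φ f x = ∫ y, φ y * f (x - y) := rfl
  have key := sq_integral_le (A := fun y => φ (y + θ * h) * f (x - y + (1 - θ) * h))
    (B := fun y => φ (y + θ * -h) * f (x - y + (1 - θ) * -h))
    (D := fun y => exp (-(a * c / (a + c)) * h ^ 2 / 2) * (φ y * f (x - y))) (int h) (int (-h))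
    ((by simpa using int 0 : Integrable fun y => φ y * f (x - y)).const_mul _)
    (fun y => (mul_pos (hφ.pos _) (hf.pos _)).le)
    (fun y => (mul_pos (hφ.pos _) (hf.pos _)).le)
    (by rw [← e]; exact cv_pos hφ hf _) (by rw [← e]; exact cv_pos hφ hf _) ?_
    (fun y => (mul_pos (exp_pos _) (mul_pos (hφ.pos _) (hf.pos _))).le)
  · rw [← e, ← e, integral_const_mul, ← e0, mul_pow, ← exp_nat_mul] at key
    calc _ = _ := by rw [mul_comm]; congr 2; push_cast; ring
      _ ≤ _ := key
  · intro y
    have h1 := hφ.semi y (θ * h)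
    have h2 := hf.semi (x - y) ((1 - θ) * h)
    have h3 := mul_le_mul h1 h2 (by have := hf.pos (x - y); positivity)
      (mul_pos (hφ.pos _) (hφ.pos _)).le
    have h4 : exp (-(a * c / (a + c)) * h ^ 2 / 2) ^ 2 =
        exp (-a * (θ * h) ^ 2) * exp (-c * ((1 - θ) * h) ^ 2) := by
      rw [← exp_nat_mul, ← exp_add, ← hθ']; congr 1; push_cast; ring
    have h5 : y + θ * -h = y - θ * h := by ring
    have h6 : x - y + (1 - θ) * -h = x - y - (1 - θ) * h := by ring
    rw [mul_pow, h4, h5, h6]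
    calc _ = _ := by ring
      _ ≤ _ := h3
      _ = _ := by ring

lemma cv_diff (hφ : GoodDensity a v φ) (hf : GoodDensity c v' f) {B' : ℝ}
    (hd : Continuous (deriv φ)) (hB' : ∀ x, |deriv φ x| ≤ B') : Differentiable ℝ (cv φ f) := by
  intro x
  obtain ⟨B, hB⟩ := hφ.bdd
  have e : cv φ f = fun x => ∫ y, φ (x - y) * f y := by ext x; exact cv_swap φ f x
  have hφc := hφ.diff.continuous
  have hfc := hf.diff.continuous
  rw [e]
  refine (hasDerivAt_integral_of_dominated_loc_of_deriv_le (𝕜 := ℝ) (s := Set.univ)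
    (F := fun x y => φ (x - y) * f y) (F' := fun x y => deriv φ (x - y) * f y)
    (bound := fun y => B' * |f y|) Filter.univ_mem ?_ ?_ ?_ ?_ ?_ ?_).2.differentiableAt
  · exact Eventually.of_forall fun x => by fun_prop
  · exact integrable_mul_of_bdd hf.int0 (by fun_prop) (fun y => hB _)
  · fun_prop
  · refine ae_of_all _ fun y x _ => ?_
    rw [norm_mul]
    exact mul_le_mul_of_nonneg_right (hB' _) (abs_nonneg _)
  · exact hf.int0.abs.const_mul _
  · refine ae_of_all _ fun y x _ => ?_
    exact ((hφ.diff (x - y)).hasDerivAt.comp_sub_const x y).mul_const _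

lemma GoodDensity.cv (hφ : GoodDensity a v φ) (hf : GoodDensity c v' f) (ha : 0 < a) (hc : 0 < c)
    {B₁ B' : ℝ} (hB₁ : ∀ x, |x * φ x| ≤ B₁)
    (hd : Continuous (deriv φ)) (hB' : ∀ x, |deriv φ x| ≤ B') :
    GoodDensity (a * c / (a + c)) (v + v') (cv φ f) := by
  obtain ⟨B, hB⟩ := hφ.bdd
  obtain ⟨D, hD⟩ := hf.bdd
  have hφc := hφ.diff.continuous
  have hfc := hf.diff.continuous
  have e1 : (fun x => x * _root_.cv φ f x) = fun x =>
      _root_.cv (fun x => x * φ x) f x + _root_.cv φ (fun x => x * f x) x := by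
    ext x
    unfold _root_.cv
    rw [← integral_const_mul, ← integral_add (integrable_refl_of_bdd hf.int0 (by fun_prop) hB₁ x)
      (integrable_refl_of_bdd hf.int1 (by fun_prop) hB x)]
    congr 1; ext y; ring
  have e2 : (fun x => x ^ 2 * _root_.cv φ f x) = fun x =>
      _root_.cv (fun x => x ^ 2 * φ x) f x + 2 * _root_.cv (fun x => x * φ x) (fun x => x * f x) x
        + _root_.cv φ (fun x => x ^ 2 * f x) x := by
    ext x
    unfold _root_.cv
    have j1 := integrable_refl_of_bdd' hφ.int2 hfc hD x
    have j2 := integrable_refl_of_bdd hf.int1 (g := fun x => x * φ x) (by fun_prop) hB₁ x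
    have j3 := integrable_refl_of_bdd hf.int2 hφc hB x
    rw [← integral_const_mul, ← integral_const_mul, ← integral_add j1 (j2.const_mul 2),
      ← integral_add (j1.fun_add (j2.const_mul 2)) j3]
    congr 1; ext y; ring
  refine ⟨cv_pos hφ hf, cv_diff hφ hf hd hB', ⟨B, fun x => ?_⟩, cv_integrable hφ.int0 hf.int0, ?_,
    ?_, ?_, ?_, ?_, cv_tp hφ hf, cv_semi hφ hf ha hc⟩
  · rw [cv_swap, abs_of_nonneg (integral_nonneg fun y => (mul_pos (hφ.pos _) (hf.pos _)).le)]
    calc ∫ y, φ (x - y) * f y ≤ ∫ y, B * f y := by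
          refine integral_mono (integrable_mul_of_bdd hf.int0 (by fun_prop) (fun y => hB _))
            (hf.int0.const_mul _) fun y => ?_
          exact mul_le_mul_of_nonneg_right ((le_abs_self _).trans (hB _)) (hf.pos y).le
      _ = B := by rw [integral_const_mul, hf.m0, mul_one]
  · rw [e1]; exact (cv_integrable hφ.int1 hf.int0).add (cv_integrable hφ.int0 hf.int1)
  · rw [e2]; exact ((cv_integrable hφ.int2 hf.int0).add
      ((cv_integrable hφ.int1 hf.int1).const_mul 2)).add (cv_integrable hφ.int0 hf.int2)
  · rw [cv_integral hφ.int0 hf.int0, hφ.m0, hf.m0, mul_one]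
  · rw [e1, integral_add (cv_integrable hφ.int1 hf.int0) (cv_integrable hφ.int0 hf.int1),
      cv_integral hφ.int1 hf.int0, cv_integral hφ.int0 hf.int1, hφ.m1, hf.m1]; simp
  · rw [e2, integral_add ((cv_integrable hφ.int2 hf.int0).fun_add
      ((cv_integrable hφ.int1 hf.int1).const_mul 2)) (cv_integrable hφ.int0 hf.int2),
      integral_add (cv_integrable hφ.int2 hf.int0) ((cv_integrable hφ.int1 hf.int1).const_mul 2),
      integral_const_mul, cv_integral hφ.int2 hf.int0, cv_integral hφ.int1 hf.int1,
      cv_integral hφ.int0 hf.int2, hφ.m1, hf.m1, hφ.m0, hf.m0, hφ.m2, hf.m2]; simp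
end step

/-! ### Expansion of a convolution power at the origin -/

/-- A log-concave `f` lies below its exponential tangent at `0`, and the bound on the second
differences of `log f` turns this into a matching lower bound. -/
lemma exists_slope {c v : ℝ} {f : ℝ → ℝ} (hf : GoodDensity c v f) :
    ∃ l : ℝ, (∀ x, f x ≤ f 0 * exp (l * x)) ∧
      ∀ x, f 0 * exp (l * x - c * x ^ 2) ≤ f x := by
  obtain ⟨l, hl⟩ : ∃ l, HasDerivAt (fun x => log (f x)) l 0 :=
    ⟨_, (hf.diff 0).hasDerivAt.log (hf.pos 0).ne'⟩
  have mid : ∀ x, f 0 * f x ≤ f (x / 2) ^ 2 := by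
    intro x
    rcases le_total 0 x with h | h
    · have := hf.tp 0 (x / 2) (x / 2) (by linarith) (by linarith)
      simpa [sq] using this
    · have := hf.tp x (-x / 2) (-x / 2) (by linarith) (by linarith)
      have e1 : x + -x / 2 + -x / 2 = 0 := by ring
      have e2 : x + -x / 2 = x / 2 := by ring
      rw [e1, e2] at this
      nlinarith
  have midlog : ∀ x, log (f x) - log (f 0) ≤ 2 * (log (f (x / 2)) - log (f 0)) := by
    intro x
    have := log_le_log (mul_pos (hf.pos 0) (hf.pos x)) (mid x)
    rw [log_mul (hf.pos 0).ne' (hf.pos x).ne', log_pow] at this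
    push_cast at this
    linarith
  have iter : ∀ (n : ℕ) x, log (f x) - log (f 0) ≤ 2 ^ n * (log (f (x / 2 ^ n)) - log (f 0)) := by
    intro n x
    induction n with
    | zero => simp
    | succ n ih =>
      refine ih.trans ?_
      have := mul_le_mul_of_nonneg_left (midlog (x / 2 ^ n)) (by positivity : (0 : ℝ) ≤ 2 ^ n)
      calc _ ≤ _ := this
        _ = _ := by rw [div_div, ← pow_succ]; ring
  have up : ∀ x, f x ≤ f 0 * exp (l * x) := by
    intro x
    have h1 : HasDerivAt (fun t => log (f (t * x))) (l * x) 0 := by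
      have : HasDerivAt (fun t : ℝ => t * x) x 0 := by simpa using (hasDerivAt_id (0 : ℝ)).mul_const x
      exact HasDerivAt.comp (h₂ := fun x => log (f x)) (0 : ℝ) (by simpa using hl) this
    have h2 : Tendsto (fun n : ℕ => ((2 : ℝ) ^ n)⁻¹) atTop (nhdsWithin 0 {0}ᶜ) := by
      rw [tendsto_nhdsWithin_iff]
      refine ⟨?_, Eventually.of_forall fun n => by simp⟩
      have := tendsto_pow_atTop_nhds_zero_of_lt_one (r := (2 : ℝ)⁻¹) (by norm_num) (by norm_num)
      simpa using this
    have h3 := (h1.tendsto_slope).comp h2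
    have h4 : log (f x) - log (f 0) ≤ l * x := by
      refine ge_of_tendsto h3 (Eventually.of_forall fun n => ?_)
      refine (iter n x).trans (le_of_eq ?_)
      simp only [Function.comp, slope, vsub_eq_sub, sub_zero, inv_inv, smul_eq_mul, zero_mul]
      congr 4
      field_simp
    have h5 : log (f x) ≤ log (f 0 * exp (l * x)) := by
      rw [log_mul (hf.pos 0).ne' (exp_pos _).ne', log_exp]; linarith
    exact (log_le_log_iff (hf.pos x) (mul_pos (hf.pos 0) (exp_pos _))).1 h5
  refine ⟨l, up, fun x => ?_⟩
  have h1 := hf.semi 0 x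
  have h2 := up (-x)
  rw [zero_add, zero_sub] at h1
  have h3 : f 0 ^ 2 * exp (-c * x ^ 2) ≤ f x * (f 0 * exp (l * -x)) :=
    h1.trans (mul_le_mul_of_nonneg_left h2 (hf.pos x).le)
  have h4 : exp (l * x - c * x ^ 2) = exp (-c * x ^ 2) * exp (l * x) := by
    rw [← exp_add]; congr 1; ring
  have h5 : exp (l * -x) * exp (l * x) = 1 := by rw [← exp_add]; simp
  have h6 := mul_le_mul_of_nonneg_right h3 (exp_pos (l * x)).le
  have h7 : f x * (f 0 * exp (l * -x)) * exp (l * x) = f x * f 0 := by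
    rw [mul_assoc, mul_assoc, h5, mul_one]
  rw [h7] at h6
  rw [h4]
  have := hf.pos 0
  refine le_of_mul_le_mul_left ?_ this
  calc _ = _ := by ring
    _ ≤ _ := h6
    _ = _ := by ring

/-- The logarithmic slope at `0` of a centred density at scale `√M` is `O(1/√M)`. The mass of `f`
is compared with that of its translate by `t = ±√M`. -/
lemma slope_bound {a v M : ℝ} {f : ℝ → ℝ} (hM : 0 < M) (ha : 0 < a)
    (hf : GoodDensity (a / M) (M * v) f) {l : ℝ}
    (hl : ∀ x, f 0 * exp (l * x - a / M * x ^ 2) ≤ f x) :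
    |l| * √M ≤ a + a * (1 + v) / 2 := by
  have key : ∀ t : ℝ, t ^ 2 = M → -(l * t) ≤ a + a * (1 + v) / 2 := by
    intro t ht
    have hp : ∀ x, f x * (1 - l * t - a - a / (2 * M) * (M + x ^ 2)) ≤ f (x - t) := by
      intro x
      have h1 := hf.semi ((x - t) / 2) ((t - x) / 2)
      have e1 : (x - t) / 2 + (t - x) / 2 = 0 := by ring
      have e2 : (x - t) / 2 - (t - x) / 2 = x - t := by ring
      rw [e1, e2] at h1
      have h2 : f (-t) * f x ≤ f ((x - t) / 2) ^ 2 := by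
        rcases le_total (-t) x with h | h
        · have := hf.tp (-t) ((x + t) / 2) ((x + t) / 2) (by linarith) (by linarith)
          have e3 : -t + (x + t) / 2 + (x + t) / 2 = x := by ring
          have e4 : -t + (x + t) / 2 = (x - t) / 2 := by ring
          rw [e3, e4] at this
          rwa [sq]
        · have := hf.tp x (-(x + t) / 2) (-(x + t) / 2) (by linarith) (by linarith)
          have e3 : x + -(x + t) / 2 + -(x + t) / 2 = -t := by ring
          have e4 : x + -(x + t) / 2 = (x - t) / 2 := by ring
          rw [e3, e4] at this
          rwa [sq, mul_comm (f (-t))]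
      have h3 := hl (-t)
      have e5 : l * -t - a / M * (-t) ^ 2 = -(l * t) - a := by
        rw [neg_sq, ht]; field_simp
      rw [e5] at h3
      have p0 := hf.pos 0
      have px := hf.pos x
      have h4 : f 0 * (f x * exp (-(l * t) - a - a / M * ((t - x) / 2) ^ 2)) ≤ f 0 * f (x - t) :=
        calc f 0 * (f x * exp (-(l * t) - a - a / M * ((t - x) / 2) ^ 2))
            = f 0 * exp (-(l * t) - a) * f x * exp (-(a / M) * ((t - x) / 2) ^ 2) := by
              rw [sub_eq_add_neg (-(l * t) - a), exp_add, neg_mul]; ring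
          _ ≤ f (-t) * f x * exp (-(a / M) * ((t - x) / 2) ^ 2) := by gcongr
          _ ≤ f ((x - t) / 2) ^ 2 * exp (-(a / M) * ((t - x) / 2) ^ 2) := by gcongr
          _ ≤ _ := h1
      refine le_trans ?_ (le_of_mul_le_mul_left h4 p0)
      refine mul_le_mul_of_nonneg_left ?_ px.le
      have h5 := add_one_le_exp (-(l * t) - a - a / M * ((t - x) / 2) ^ 2)
      have h6 : a / M * ((t - x) / 2) ^ 2 ≤ a / (2 * M) * (M + x ^ 2) := by
        have : a / (2 * M) * (M + x ^ 2) = a / M * ((M + x ^ 2) / 2) := by field_simp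
        rw [this]
        refine mul_le_mul_of_nonneg_left ?_ (by positivity)
        rw [← ht]; nlinarith [sq_nonneg (t + x)]
      linarith
    have e : (fun x => f x * (1 - l * t - a - a / (2 * M) * (M + x ^ 2))) =
        fun x => (1 - l * t - a - a / 2) * f x - a / (2 * M) * (x ^ 2 * f x) := by
      ext x; field_simp; ring
    have h1 : ∫ x, f x * (1 - l * t - a - a / (2 * M) * (M + x ^ 2)) ≤ ∫ x, f (x - t) :=
      integral_mono (by rw [e]; exact (hf.int0.const_mul _).sub (hf.int2.const_mul _))
        (hf.int0.comp_sub_right t) hp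
    rw [e, integral_sub (hf.int0.const_mul _) (hf.int2.const_mul _), integral_const_mul,
      integral_const_mul, hf.m0, hf.m2, integral_sub_right_eq_self f t, hf.m0] at h1
    have : a / (2 * M) * (M * v) = a * v / 2 := by field_simp
    rw [this] at h1
    linarith
  have s2 : √M ^ 2 = M := sq_sqrt hM.le
  rcases abs_cases l with ⟨h, -⟩ | ⟨h, -⟩ <;> rw [h]
  · have := key (-√M) (by rw [neg_sq, s2]); linarith
  · have := key (√M) s2; linarith

lemma exp_le_quadratic (u : ℝ) : exp u ≤ 1 + u + u ^ 2 * exp |u| := by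
  have h := Complex.norm_exp_sub_sum_le_norm_mul_exp (u : ℂ) 2
  simp only [Finset.sum_range_succ, Finset.sum_range_zero, pow_zero, pow_one, Nat.factorial,
    Nat.cast_one, div_one, zero_add, Complex.norm_real, mul_one] at h
  have e : Complex.exp (u : ℂ) - (1 + (u : ℂ)) = ((exp u - (1 + u) : ℝ) : ℂ) := by push_cast; rfl
  rw [e, Complex.norm_real, norm_eq_abs, norm_eq_abs, sq_abs] at h
  linarith [(le_abs_self _).trans h]

/-- First-order expansion of `f` at `0`: the remainder is `O(1/M)` relative to `f 0`, locally uniformly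
and with at most exponential growth in `x`. -/
lemma expand {a v M : ℝ} {f : ℝ → ℝ} (hM : 1 ≤ M) (ha : 0 < a) (hv : 0 ≤ v)
    (hf : GoodDensity (a / M) (M * v) f) :
    ∃ l : ℝ, (∀ x, f 0 * (1 + l * x - a / M * x ^ 2) ≤ f x) ∧
      ∀ x, |f x - f 0 * (1 + l * x)| ≤ f 0 / M * (((a + a * (1 + v) / 2) ^ 2 + a) *
        (x ^ 2 * exp ((a + a * (1 + v) / 2) * |x|))) := by
  obtain ⟨l, hu, hl⟩ := exists_slope hf
  have hM0 : 0 < M := by linarith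
  have hb := slope_bound hM0 ha hf hl
  set K := a + a * (1 + v) / 2 with hK
  have hK0 : 0 ≤ K := by positivity
  have p0 := hf.pos 0
  have low : ∀ x, f 0 * (1 + l * x - a / M * x ^ 2) ≤ f x := fun x => by
    refine le_trans (mul_le_mul_of_nonneg_left ?_ p0.le) (hl x)
    have := add_one_le_exp (l * x - a / M * x ^ 2)
    linarith
  refine ⟨l, low, fun x => ?_⟩
  have hlK : |l| ≤ K := by
    have : 1 ≤ √M := by rwa [one_le_sqrt]
    nlinarith [abs_nonneg l]
  have hl2 : l ^ 2 ≤ K ^ 2 / M := by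
    rw [le_div_iff₀ hM0]
    have := pow_le_pow_left₀ (by positivity) hb 2
    rwa [mul_pow, sq_abs, sq_sqrt hM0.le] at this
  have he : 1 ≤ exp (K * |x|) := one_le_exp (by positivity)
  rw [abs_le]
  constructor
  · have h1 := low x
    have h2 : a / M * x ^ 2 ≤ 1 / M * ((K ^ 2 + a) * (x ^ 2 * exp (K * |x|))) := by
      have : a / M * x ^ 2 = 1 / M * (a * (x ^ 2 * 1)) := by ring
      rw [this]
      gcongr
      nlinarith
    have h3 := mul_le_mul_of_nonneg_left h2 p0.le
    have : f 0 / M * ((K ^ 2 + a) * (x ^ 2 * exp (K * |x|))) =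
      f 0 * (1 / M * ((K ^ 2 + a) * (x ^ 2 * exp (K * |x|)))) := by ring
    rw [this]
    linarith
  · have h1 := exp_le_quadratic (l * x)
    have h2 : (l * x) ^ 2 * exp |l * x| ≤ 1 / M * ((K ^ 2 + a) * (x ^ 2 * exp (K * |x|))) := by
      rw [mul_pow, abs_mul]
      calc l ^ 2 * x ^ 2 * exp (|l| * |x|) ≤ K ^ 2 / M * x ^ 2 * exp (K * |x|) := by gcongr
        _ = 1 / M * (K ^ 2 * (x ^ 2 * exp (K * |x|))) := by ring
        _ ≤ _ := by gcongr; linarith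
    have h3 := mul_le_mul_of_nonneg_left (h1.trans (add_le_add_right h2 _)) p0.le
    have h4 := hu x
    have : f 0 / M * ((K ^ 2 + a) * (x ^ 2 * exp (K * |x|))) =
      f 0 * (1 / M * ((K ^ 2 + a) * (x ^ 2 * exp (K * |x|)))) := by ring
    rw [this]
    linarith

/-! ### Convolution powers and exchangeability -/

/-- `fs φ n` is the `(n+1)`-fold convolution power of `φ`. -/
def fs (φ : ℝ → ℝ) : ℕ → ℝ → ℝ
  | 0 => φ
  | n + 1 => cv φ (fs φ n)

/-- The hypotheses on the single-bond density: exponential moments and bounds on top of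
`GoodDensity`. -/
structure BondDensity (a v : ℝ) (φ : ℝ → ℝ) : Prop where
  good : GoodDensity a v φ
  apos : 0 < a
  bdd1 : ∃ B, ∀ x, |x * φ x| ≤ B
  derivCont : Continuous (deriv φ)
  derivBdd : ∃ B, ∀ x, |deriv φ x| ≤ B
  expInt : ∀ K, Integrable (fun x => φ x * exp (K * |x|))

/-- The semi-convexity constant of the `(n+1)`-fold convolution power decays like `1/(n+1)`, at the
rate at which its variance grows. -/
lemma BondDensity.fs_good {a v : ℝ} {φ : ℝ → ℝ} (h : BondDensity a v φ) (n : ℕ) :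
    GoodDensity (a / (n + 1 : ℕ)) ((n + 1 : ℕ) * v) (fs φ n) := by
  obtain ⟨B, hB⟩ := h.bdd1
  obtain ⟨B', hB'⟩ := h.derivBdd
  have ha := h.apos
  induction n with
  | zero => simpa [fs] using h.good
  | succ n ih =>
    have := h.good.cv ih ha (by positivity) hB h.derivCont hB'
    convert this using 1
    · push_cast; field_simp
    · push_cast; ring
    · rfl

lemma cv_comm_op {α β f : ℝ → ℝ} (hα : Integrable α) (hβ : Integrable β) (hf : Continuous f)
    {B : ℝ} (hB : ∀ x, |f x| ≤ B) (x : ℝ) : cv α (cv β f) x = cv β (cv α f) x := by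
  unfold cv
  simp_rw [← integral_const_mul]
  rw [integral_integral_swap]
  · congr 1; ext z; congr 1; ext y
    rw [show x - y - z = x - z - y by ring]; ring
  · have := (hα.mul_prod (ν := volume) hβ).bdd_mul (c := B)
      (f := fun z : ℝ × ℝ => f (x - z.1 - z.2)) (by fun_prop) (ae_of_all _ fun z => hB _)
    refine this.congr (ae_of_all _ fun z => ?_)
    simp only [Function.uncurry]
    ring

lemma cv_comm (φ f : ℝ → ℝ) (x : ℝ) : cv φ f x = cv f φ x := by
  rw [cv_swap]; unfold cv; simp_rw [mul_comm]

/-- Exchangeability of the increments: conditionally on their sum `x`, each of the `n + 2`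
increments has mean `x / (n + 2)`. -/
lemma BondDensity.exchange {a v : ℝ} {φ : ℝ → ℝ} (h : BondDensity a v φ) (n : ℕ) (x : ℝ) :
    x * fs φ (n + 1) x = (n + 2) * cv (fun y => y * φ y) (fs φ n) x := by
  obtain ⟨B, hB⟩ := h.good.bdd
  obtain ⟨B₁, hB₁⟩ := h.bdd1
  have hc := h.good.diff.continuous
  have split : ∀ n x, x * fs φ (n + 1) x =
      cv (fun y => y * φ y) (fs φ n) x + cv φ (fun y => y * fs φ n y) x := by
    intro n x
    have hg := h.fs_good n
    change x * cv φ (fs φ n) x = _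
    unfold cv
    rw [← integral_const_mul, ← integral_add (integrable_refl_of_bdd hg.int0 (by fun_prop) hB₁ x)
      (integrable_refl_of_bdd hg.int1 (by fun_prop) hB x)]
    congr 1; ext y; ring
  induction n generalizing x with
  | zero =>
    rw [split]
    change _ + cv φ (fun y => y * φ y) x = _ * cv _ φ x
    rw [cv_comm φ]
    change cv _ φ x + _ = _
    push_cast; ring
  | succ n ih =>
    obtain ⟨D, hD⟩ := (h.fs_good n).bdd
    rw [split]
    have e : (fun y => y * fs φ (n + 1) y) =
        fun y => (n + 2) * cv (fun y => y * φ y) (fs φ n) y := by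
      ext y; exact ih y
    rw [e]
    have e2 : cv φ (fun y => ((n : ℝ) + 2) * cv (fun y => y * φ y) (fs φ n) y) x =
        (n + 2) * cv φ (cv (fun y => y * φ y) (fs φ n)) x := by
      unfold cv
      rw [← integral_const_mul]
      congr 1; ext y; ring
    rw [e2, cv_comm_op h.good.int0 h.good.int1 (h.fs_good n).diff.continuous hD]
    change _ + _ * cv _ (fs φ (n + 1)) x = _
    push_cast; ring

/-! ### The ratio of partition functions -/

lemma expInt_pow {k : ℝ → ℝ} (hk : ∀ K, Integrable (fun x => k x * exp (K * |x|))) (K : ℝ)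
    (j : ℕ) : Integrable (fun x => x ^ j * exp (K * |x|) * k x) := by
  have h := integrable_mul_of_bdd (g := fun x => x ^ j * exp (-|x|)) (B := j.factorial)
    (hk (K + 1)) (by fun_prop) ?_
  · refine h.congr (ae_of_all _ fun x => ?_)
    simp only []
    rw [show K * |x| = -|x| + (K + 1) * |x| by ring, exp_add]; ring
  · intro x
    rw [abs_mul, abs_pow, abs_of_pos (exp_pos _), exp_neg, ← div_eq_mul_inv,
      div_le_iff₀ (exp_pos _)]
    have := pow_div_factorial_le_exp |x| (abs_nonneg x) j
    rwa [div_le_iff₀ (by positivity), mul_comm] at this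

lemma expInt_pow' {k : ℝ → ℝ} (hk : ∀ K, Integrable (fun x => k x * exp (K * |x|)))
    (j : ℕ) : Integrable (fun x => x ^ j * k x) := by
  simpa using expInt_pow hk 0 j

/-- The `O(1/n)` estimate for the ratio of the perturbed to the unperturbed partition function.
Subtracting from `k` the multiples of `φ` and `x φ` that cancel its zeroth and first moments
changes the numerator in an explicit way, because of exchangeability; what remains only sees the
second-order remainder of `fs φ n` at `0`. -/
lemma core {a v : ℝ} {φ k : ℝ → ℝ} (h : BondDensity a v φ) (hv : 0 < v)
    (hk : ∀ K, Integrable (fun x => k x * exp (K * |x|))) :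
    ∃ C, ∀ᶠ n : ℕ in atTop,
      |(∫ x, k x * fs φ n (-x)) / (∫ x, φ x * fs φ n (-x)) - ∫ x, k x| ≤ C / (n + 1 : ℕ) := by
  set R := ∫ x, k x with hR
  set lam := (∫ x, x * k x) / v with hlam
  set g : ℝ → ℝ := fun x => k x - R * φ x - lam * (x * φ x) with hg
  set K := a + a * (1 + v) / 2 with hK
  have ha := h.apos
  have k0 : Integrable k := by simpa using hk 0
  have k1 : Integrable (fun x => x * k x) := by simpa using expInt_pow' hk 1
  have φ0 := h.good.int0
  have φ1 := h.good.int1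
  have φ2 := h.good.int2
  have hgint : ∀ L, Integrable (fun x => g x * exp (L * |x|)) := by
    intro L
    have := (((hk L).sub_fun ((h.expInt L).const_mul R)).sub_fun ((expInt_pow h.expInt L 1).const_mul lam))
    refine this.congr (ae_of_all _ fun x => ?_)
    simp only [hg]; ring
  have g0 : Integrable g := by simpa using hgint 0
  have g1 : Integrable (fun x => x * g x) := by simpa using expInt_pow' hgint 1
  have ig0 : ∫ x, g x = 0 := by
    simp only [hg]
    rw [integral_sub (k0.sub_fun (φ0.const_mul R)) (φ1.const_mul lam),
      integral_sub k0 (φ0.const_mul R), integral_const_mul, integral_const_mul, h.good.m0,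
      h.good.m1]
    simp [hR]
  have ig1 : ∫ x, x * g x = 0 := by
    have e : (fun x => x * g x) = fun x => x * k x - R * (x * φ x) - lam * (x ^ 2 * φ x) := by
      ext x; simp only [hg]; ring
    rw [e, integral_sub (k1.sub_fun (φ1.const_mul R)) (φ2.const_mul lam),
      integral_sub k1 (φ1.const_mul R), integral_const_mul, integral_const_mul, h.good.m1,
      h.good.m2, hlam]
    field_simp; simp
  have gE : Integrable (fun x => |g x| * ((K ^ 2 + a) * (x ^ 2 * exp (K * |x|)))) := by
    have := ((expInt_pow hgint K 2).abs).const_mul (K ^ 2 + a)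
    refine this.congr (ae_of_all _ fun x => ?_)
    simp only []
    rw [abs_mul, abs_of_nonneg (by positivity : 0 ≤ x ^ 2 * exp (K * |x|))]; ring
  set C := ∫ x, |g x| * ((K ^ 2 + a) * (x ^ 2 * exp (K * |x|))) with hC
  refine ⟨2 * C, ?_⟩
  obtain ⟨n₀, hn₀⟩ := exists_nat_gt (2 * a * v)
  filter_upwards [eventually_ge_atTop n₀] with n hn
  set M : ℝ := ((n + 1 : ℕ) : ℝ) with hM
  have hM1 : 1 ≤ M := by rw [hM]; push_cast; linarith [n.cast_nonneg (α := ℝ)]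
  have hM0 : 0 < M := by linarith
  have hMav : 2 * a * v ≤ M := by
    have : (n₀ : ℝ) ≤ n := by exact_mod_cast hn
    rw [hM]; push_cast; linarith
  have hf := h.fs_good n
  rw [← hM] at hf
  obtain ⟨l, hlow, hexp⟩ := expand hM1 ha hv.le hf
  rw [← hK] at hexp
  set f := fs φ n with hfdef
  have p0 := hf.pos 0
  obtain ⟨D, hD⟩ := hf.bdd
  have fc := hf.diff.continuous
  have times : ∀ {q : ℝ → ℝ}, Integrable q → Integrable (fun x => q x * f (-x)) := by
    intro q hq
    simpa using integrable_refl_of_bdd' hq fc hD 0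
  -- `φ` is centred, so the linear term of the lower bound on `f` drops out of the integral
  have den : f 0 / 2 ≤ ∫ x, φ x * f (-x) := by
    have e : (fun x => φ x * (f 0 * (1 + l * -x - a / M * (-x) ^ 2))) =
        fun x => f 0 * φ x - f 0 * l * (x * φ x) - f 0 * (a / M) * (x ^ 2 * φ x) := by
      ext x; ring
    have i : Integrable (fun x => φ x * (f 0 * (1 + l * -x - a / M * (-x) ^ 2))) := by
      rw [e]
      exact ((φ0.const_mul _).sub_fun (φ1.const_mul _)).sub_fun (φ2.const_mul _)
    have := integral_mono i (times φ0) fun x =>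
      mul_le_mul_of_nonneg_left (hlow (-x)) (h.good.pos x).le
    rw [e, integral_sub ((φ0.const_mul _).sub_fun (φ1.const_mul _)) (φ2.const_mul _),
      integral_sub (φ0.const_mul _) (φ1.const_mul _), integral_const_mul, integral_const_mul,
      integral_const_mul, h.good.m0, h.good.m1, h.good.m2] at this
    refine le_trans ?_ this
    have h2 : a / M * v ≤ 1 / 2 := by
      rw [div_mul_eq_mul_div, div_le_iff₀ hM0]; linarith
    nlinarith
  have dpos : 0 < ∫ x, φ x * f (-x) := by linarith
  have exch : ∫ x, x * φ x * f (-x) = 0 := by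
    have := h.exchange n 0
    rw [zero_mul] at this
    have h2 : cv (fun y => y * φ y) (fs φ n) 0 = 0 := by
      rcases mul_eq_zero.1 this.symm with h3 | h3
      · have : (0 : ℝ) < n + 2 := by positivity
        linarith
      · exact h3
    simpa [cv] using h2
  have num : (∫ x, k x * f (-x)) - R * (∫ x, φ x * f (-x)) =
      ∫ x, g x * (f (-x) - f 0 * (1 + l * -x)) := by
    have e1 : (fun x => g x * (f (-x) - f 0 * (1 + l * -x))) = fun x =>
        (k x * f (-x) - R * (φ x * f (-x)) - lam * (x * φ x * f (-x)))
          - (f 0 * g x - f 0 * l * (x * g x)) := by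
      ext x; simp only [hg]; ring
    have t0 := times k0
    have t1 := (times φ0).const_mul R
    have t2 := (times φ1).const_mul lam
    rw [e1, integral_sub ((t0.sub_fun t1).sub_fun t2) ((g0.const_mul _).sub_fun (g1.const_mul _)),
      integral_sub (t0.sub_fun t1) t2, integral_sub t0 t1,
      integral_sub (g0.const_mul _) (g1.const_mul _), integral_const_mul, integral_const_mul,
      integral_const_mul, integral_const_mul, ig0, ig1, exch]
    ring
  have numb : |∫ x, g x * (f (-x) - f 0 * (1 + l * -x))| ≤ f 0 / M * C := by
    rw [hC, ← integral_const_mul, ← norm_eq_abs]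
    refine norm_integral_le_of_norm_le (gE.const_mul _) (ae_of_all _ fun x => ?_)
    rw [norm_mul, norm_eq_abs, norm_eq_abs]
    have := mul_le_mul_of_nonneg_left (hexp (-x)) (abs_nonneg (g x))
    rw [abs_neg, neg_sq] at this
    calc _ ≤ _ := this
      _ = _ := by ring
  have C0 : 0 ≤ C := integral_nonneg fun x => by positivity
  have e : (∫ x, k x * f (-x)) / (∫ x, φ x * f (-x)) - R =
      ((∫ x, k x * f (-x)) - R * (∫ x, φ x * f (-x))) / ∫ x, φ x * f (-x) := by
    field_simp
  rw [e, num, abs_div, abs_of_pos dpos, div_le_iff₀ dpos]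
  refine numb.trans ?_
  calc f 0 / M * C = 2 * C / M * (f 0 / 2) := by ring
    _ ≤ _ := by gcongr

/-! ### Uniformly convex potentials -/

lemma taylor_lower {V : ℝ → ℝ} {κ : ℝ} (hV : ContDiff ℝ 2 V) (h : ∀ y, κ ≤ deriv (deriv V) y)
    (x y : ℝ) : V x + deriv V x * (y - x) + κ / 2 * (y - x) ^ 2 ≤ V y := by
  have d1 : ∀ y, HasDerivAt V (deriv V y) y := fun y =>
    (hV.differentiable (by norm_num) y).hasDerivAt
  have hV1 : ContDiff ℝ 1 (deriv V) := by
    have : ContDiff ℝ (1 + 1) V := by simpa [one_add_one_eq_two] using hV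
    exact (contDiff_succ_iff_deriv.1 this).2.2
  have d2 : ∀ y, HasDerivAt (deriv V) (deriv (deriv V) y) y := fun y =>
    (hV1.differentiable (by norm_num) y).hasDerivAt
  set Q : ℝ → ℝ := fun y => V y - κ / 2 * (y - x) ^ 2 with hQ
  have q1 : ∀ y, HasDerivAt Q (deriv V y - κ * (y - x)) y := by
    intro y
    have := ((((hasDerivAt_id y).sub_const x).pow 2).const_mul (κ / 2))
    have h3 := (d1 y).sub this
    refine h3.congr_deriv ?_
    simp only [id]; push_cast; ring
  have q1' : deriv Q = fun y => deriv V y - κ * (y - x) := by ext y; exact (q1 y).deriv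
  have q2 : ∀ y, HasDerivAt (deriv Q) (deriv (deriv V) y - κ) y := by
    intro y
    rw [q1']
    have := (((hasDerivAt_id y).sub_const x).const_mul κ)
    have h3 := (d2 y).sub this
    exact h3.congr_deriv (by ring)
  have conv : ConvexOn ℝ Set.univ Q := by
    refine convexOn_univ_of_deriv2_nonneg (fun y => (q1 y).differentiableAt)
      (fun y => (q2 y).differentiableAt) fun y => ?_
    simp only [Function.iterate_succ, Function.iterate_zero, Function.comp, id]
    rw [(q2 y).deriv]; linarith [h y]
  have hx := q1 x
  simp only [sub_self, mul_zero, sub_zero] at hx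
  have key : Q x + deriv V x * (y - x) ≤ Q y := by
    rcases lt_trichotomy x y with hxy | hxy | hxy
    · have := conv.le_slope_of_hasDerivAt (Set.mem_univ x) (Set.mem_univ y) hxy hx
      rw [slope_def_field, le_div_iff₀ (by linarith)] at this
      linarith
    · rw [hxy]; simp
    · have := conv.slope_le_of_hasDerivAt (Set.mem_univ y) (Set.mem_univ x) hxy hx
      rw [slope_def_field, div_le_iff₀ (by linarith)] at this
      linarith
  simp only [hQ, sub_self] at key
  linarith

lemma taylor_upper {V : ℝ → ℝ} {κ : ℝ} (hV : ContDiff ℝ 2 V) (h : ∀ y, deriv (deriv V) y ≤ κ)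
    (x y : ℝ) : V y ≤ V x + deriv V x * (y - x) + κ / 2 * (y - x) ^ 2 := by
  have e : deriv (fun y => -V y) = fun y => -deriv V y := by ext y; exact deriv.fun_neg
  have := taylor_lower (V := fun y => -V y) (κ := -κ) hV.neg
    (fun y => by rw [e, deriv.fun_neg]; linarith [h y]) x y
  rw [e] at this
  linarith

/-- Gaussian decay of `exp (-V)` with an exponential weight, for uniformly convex `V`. -/
lemma gauss_bound {V : ℝ → ℝ} {κ : ℝ} (hV : ContDiff ℝ 2 V) (hκ : 0 < κ)
    (h : ∀ y, κ ≤ deriv (deriv V) y) (K : ℝ) :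
    ∃ C > 0, ∀ x, exp (-V x) * exp (K * |x|) ≤ C * exp (-(κ / 4) * x ^ 2) := by
  set L := |deriv V 0| + K with hL
  refine ⟨exp (-V 0 + L ^ 2 / κ), exp_pos _, fun x => ?_⟩
  rw [← exp_add, ← exp_add, exp_le_exp]
  have h1 := taylor_lower hV h 0 x
  simp only [sub_zero] at h1
  have h2 : -(deriv V 0 * x) ≤ |deriv V 0| * |x| := by
    rw [← abs_mul]; exact neg_le_abs _
  have h3 : L * |x| ≤ L ^ 2 / κ + κ / 4 * x ^ 2 := by
    have : 0 ≤ (L - κ / 2 * |x|) ^ 2 / κ := by positivity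
    have e : (L - κ / 2 * |x|) ^ 2 / κ = L ^ 2 / κ - L * |x| + κ / 4 * |x| ^ 2 := by
      field_simp; ring
    rw [e, sq_abs] at this
    linarith
  have e4 : L * |x| = |deriv V 0| * |x| + K * |x| := by rw [hL]; ring
  linarith

lemma expInt_potential {V : ℝ → ℝ} {κ : ℝ} (hV : ContDiff ℝ 2 V) (hκ : 0 < κ)
    (h : ∀ y, κ ≤ deriv (deriv V) y) (K : ℝ) :
    Integrable (fun x => exp (-V x) * exp (K * |x|)) := by
  obtain ⟨C, -, hC⟩ := gauss_bound hV hκ h K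
  have hc := hV.continuous
  refine ((integrable_exp_neg_mul_sq (by positivity : 0 < κ / 4)).const_mul C).mono'
    (by fun_prop) (ae_of_all _ fun x => ?_)
  rw [norm_eq_abs, abs_of_pos (by positivity)]
  exact hC x

lemma exp_bounded {V : ℝ → ℝ} {κ : ℝ} (hV : ContDiff ℝ 2 V) (hκ : 0 < κ)
    (h : ∀ y, κ ≤ deriv (deriv V) y) (K : ℝ) :
    ∃ C, ∀ x, exp (-V x) * exp (K * |x|) ≤ C := by
  obtain ⟨C, C0, hC⟩ := gauss_bound hV hκ h K
  refine ⟨C, fun x => (hC x).trans ?_⟩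
  have : exp (-(κ / 4) * x ^ 2) ≤ 1 := exp_le_one_iff.2 (by nlinarith [sq_nonneg x])
  nlinarith

lemma deriv_growth {V : ℝ → ℝ} {κ₁ κ₂ : ℝ} (hV : ContDiff ℝ 2 V) (hκ : 0 < κ₁)
    (h : ∀ y, κ₁ ≤ deriv (deriv V) y ∧ deriv (deriv V) y ≤ κ₂) (x : ℝ) :
    |deriv V x| ≤ (|deriv V 0| + κ₂) * exp (1 * |x|) := by
  have hV1 : ContDiff ℝ 1 (deriv V) := by
    have : ContDiff ℝ (1 + 1) V := by simpa [one_add_one_eq_two] using hV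
    exact (contDiff_succ_iff_deriv.1 this).2.2
  have := Convex.norm_image_sub_le_of_norm_deriv_le (f := deriv V) (C := κ₂) (s := Set.univ)
    (x := 0) (y := x) (fun y _ => hV1.differentiable (by norm_num) y)
    (fun y _ => by rw [norm_eq_abs, abs_of_pos (hκ.trans_le (h y).1)]; exact (h y).2) convex_univ
    (Set.mem_univ _) (Set.mem_univ _)
  rw [norm_eq_abs, norm_eq_abs, sub_zero] at this
  have h1 := abs_sub_abs_le_abs_sub (deriv V x) (deriv V 0)
  have h2 := add_one_le_exp |x|
  have h3 : 0 < κ₂ := hκ.trans_le ((h 0).1.trans (h 0).2)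
  rw [one_mul]
  nlinarith [abs_nonneg x, abs_nonneg (deriv V 0)]

/-- A normalised and centred Gibbs weight `exp (-V)` with `κ₁ ≤ V'' ≤ κ₂` is a bond density. -/
lemma bond_of_potential {V : ℝ → ℝ} {κ₁ κ₂ : ℝ} (hV : ContDiff ℝ 2 V) (hκ : 0 < κ₁)
    (h : ∀ y, κ₁ ≤ deriv (deriv V) y ∧ deriv (deriv V) y ≤ κ₂)
    (m0 : ∫ x, exp (-V x) = 1) (m1 : ∫ x, x * exp (-V x) = 0) :
    ∃ v > 0, BondDensity κ₂ v (fun x => exp (-V x)) := by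
  have hlow := fun y => (h y).1
  have hup := fun y => (h y).2
  have hc := hV.continuous
  have hdiff : Differentiable ℝ V := hV.differentiable (by norm_num)
  have hV1 : Continuous (deriv V) := hV.continuous_deriv (by norm_num)
  have hexp := expInt_potential hV hκ hlow
  have hκ₂ : 0 < κ₂ := hκ.trans_le ((h 0).1.trans (h 0).2)
  have dφ : ∀ x, HasDerivAt (fun x => exp (-V x)) (exp (-V x) * -deriv V x) x := fun x =>
    ((hdiff x).hasDerivAt.neg).exp
  have dφ' : deriv (fun x => exp (-V x)) = fun x => exp (-V x) * -deriv V x := by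
    ext x; exact (dφ x).deriv
  have conv : ∀ x u w, 0 ≤ u → 0 ≤ w → V (x + u) + V (x + w) ≤ V x + V (x + u + w) := by
    intro x u w hu hw
    rcases eq_or_lt_of_le (add_nonneg hu hw) with h0 | h0
    · have e1 : u = 0 := by linarith
      have e2 : w = 0 := by linarith
      simp [e1, e2]
    -- chord inequalities at the two inner points, from the tangents there
    have t1 := taylor_lower hV hlow (x + u) x
    have t2 := taylor_lower hV hlow (x + u) (x + u + w)
    have t3 := taylor_lower hV hlow (x + w) x
    have t4 := taylor_lower hV hlow (x + w) (x + u + w)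
    have s1 : (u + w) * V (x + u) ≤ w * V x + u * V (x + u + w) := by
      have a1 : V (x + u) - deriv V (x + u) * u ≤ V x := by nlinarith [sq_nonneg (x - (x + u))]
      have a2 : V (x + u) + deriv V (x + u) * w ≤ V (x + u + w) := by
        nlinarith [sq_nonneg (x + u + w - (x + u))]
      nlinarith
    have s2 : (u + w) * V (x + w) ≤ u * V x + w * V (x + u + w) := by
      have a1 : V (x + w) - deriv V (x + w) * w ≤ V x := by nlinarith [sq_nonneg (x - (x + w))]
      have a2 : V (x + w) + deriv V (x + w) * u ≤ V (x + u + w) := by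
        nlinarith [sq_nonneg (x + u + w - (x + w))]
      nlinarith
    refine le_of_mul_le_mul_left ?_ h0
    linarith
  have i2 : Integrable (fun x => x ^ 2 * exp (-V x)) := expInt_pow' hexp 2
  have vpos : 0 < ∫ x, x ^ 2 * exp (-V x) := by
    rw [integral_pos_iff_support_of_nonneg (fun x => by positivity) i2]
    have : Function.support (fun x => x ^ 2 * exp (-V x)) = {0}ᶜ := by
      ext x; simp [(exp_pos _).ne']
    rw [this, measure_compl (measurableSet_singleton 0) (by simp)]
    simp
  obtain ⟨C0, hC0⟩ := exp_bounded hV hκ hlow 0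
  obtain ⟨C1, hC1⟩ := exp_bounded hV hκ hlow 1
  refine ⟨_, vpos, ⟨fun x => exp_pos _, fun x => (dφ x).differentiableAt, ⟨C0, fun x => ?_⟩, ?_, ?_,
    i2, m0, m1, rfl, ?_, ?_⟩, hκ₂, ⟨C1, fun x => ?_⟩, ?_,
    ⟨(|deriv V 0| + κ₂) * C1, fun x => ?_⟩, hexp⟩
  · simpa using hC0 x
  · simpa using hexp 0
  · simpa using expInt_pow' hexp 1
  · intro x u w hu hw
    rw [← exp_add, ← exp_add, exp_le_exp]
    linarith [conv x u w hu hw]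
  · intro x t
    rw [← exp_nat_mul, ← exp_add, ← exp_add, exp_le_exp]
    have t1 := taylor_upper hV hup x (x + t)
    have t2 := taylor_upper hV hup x (x - t)
    push_cast
    nlinarith
  · rw [abs_mul, abs_of_pos (exp_pos _)]
    refine le_trans ?_ (hC1 x)
    rw [mul_comm]
    gcongr
    linarith [add_one_le_exp (1 * |x|)]
  · rw [dφ']; fun_prop
  · rw [dφ']
    simp only [abs_mul, abs_of_pos (exp_pos _), abs_neg]
    have := deriv_growth hV hκ h x
    calc exp (-V x) * |deriv V x| ≤ exp (-V x) * ((|deriv V 0| + κ₂) * exp (1 * |x|)) := by gcongr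
      _ = (|deriv V 0| + κ₂) * (exp (-V x) * exp (1 * |x|)) := by ring
      _ ≤ _ := by gcongr; exact hC1 x

/-! ### Exponential tilting and the Cauchy–Born energy -/

lemma tilt_integrable {V : ℝ → ℝ} {κ : ℝ} (hV : ContDiff ℝ 2 V) (hκ : 0 < κ)
    (h : ∀ y, κ ≤ deriv (deriv V) y) (j : ℕ) (τ : ℝ) :
    Integrable (fun x => x ^ j * exp (-V x + τ * x)) := by
  have hc := hV.continuous
  refine (expInt_pow (expInt_potential hV hκ h) |τ| j).mono (by fun_prop) (ae_of_all _ fun x => ?_)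
  rw [norm_mul, norm_mul, norm_mul, exp_add, mul_assoc, mul_comm (exp (-V x)), norm_mul]
  gcongr
  rw [norm_eq_abs, norm_eq_abs, abs_of_pos (exp_pos _), abs_of_pos (exp_pos _), exp_le_exp,
    ← abs_mul]
  exact le_abs_self _

/-- Translating the integration variable by `τ / κ₂` and applying Jensen's inequality to the
quadratic upper bound on `V`: the cumulant generating function of `exp (-V)` is at least
quadratic. -/
lemma tilt_lower {V : ℝ → ℝ} {κ₁ κ₂ : ℝ} (hV : ContDiff ℝ 2 V) (hκ : 0 < κ₁)
    (h : ∀ y, κ₁ ≤ deriv (deriv V) y ∧ deriv (deriv V) y ≤ κ₂) {M : ℝ}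
    (hM : ∫ x, x * exp (-V x) = M * ∫ x, exp (-V x)) (τ : ℝ) :
    (∫ x, exp (-V x)) * exp (τ ^ 2 / (2 * κ₂) + τ * M) ≤ ∫ x, exp (-V x + τ * x) := by
  have hlow := fun y => (h y).1
  have hκ₂ : 0 < κ₂ := hκ.trans_le ((h 0).1.trans (h 0).2)
  have hdiff : Differentiable ℝ V := hV.differentiable (by norm_num)
  have hc := hV.continuous
  have hV1 : Continuous (deriv V) := hV.continuous_deriv (by norm_num)
  have i0 : Integrable (fun x => exp (-V x)) := by simpa using tilt_integrable hV hκ hlow 0 0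
  have i1 : Integrable (fun x => x * exp (-V x)) := by simpa using tilt_integrable hV hκ hlow 1 0
  have iV : Integrable (fun x => exp (-V x) * -deriv V x) := by
    refine ((expInt_potential hV hκ hlow 1).const_mul (|deriv V 0| + κ₂)).mono' (by fun_prop)
      (ae_of_all _ fun x => ?_)
    rw [norm_mul, norm_neg, norm_eq_abs, norm_eq_abs, abs_of_pos (exp_pos _)]
    have := deriv_growth hV hκ h x
    calc exp (-V x) * |deriv V x| ≤ exp (-V x) * ((|deriv V 0| + κ₂) * exp (1 * |x|)) := by gcongr
      _ = _ := by ring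
  have zV : ∫ x, exp (-V x) * -deriv V x = 0 :=
    integral_eq_zero_of_hasDerivAt_of_integrable
      (fun x => ((hdiff x).hasDerivAt.neg).exp) iV i0
  set t := τ / κ₂ with ht
  set m := τ ^ 2 / (2 * κ₂) + τ * M with hm
  have iτ : Integrable (fun x => exp (-V x + τ * x)) := by
    simpa using tilt_integrable hV hκ hlow 0 τ
  rw [← integral_add_right_eq_self (fun x => exp (-V x + τ * x)) t]
  have ig := ((i0.const_mul (1 - τ * M)).fun_add (iV.const_mul t)).fun_add (i1.const_mul τ)
  have e : (∫ x, exp (-V x)) * exp m = ∫ x, exp m * (((1 - τ * M) * exp (-V x)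
      + t * (exp (-V x) * -deriv V x)) + τ * (x * exp (-V x))) := by
    rw [integral_const_mul, integral_add ((i0.const_mul _).fun_add (iV.const_mul t))
      (i1.const_mul τ), integral_add (i0.const_mul _) (iV.const_mul t), integral_const_mul,
      integral_const_mul, integral_const_mul, zV, hM]
    ring
  rw [e]
  refine integral_mono (ig.const_mul _) (iτ.comp_add_right t) fun x => ?_
  have t1 := taylor_upper hV (fun y => (h y).2) x (x + t)
  have et : -(κ₂ / 2 * t ^ 2) + τ * t = τ ^ 2 / (2 * κ₂) := by rw [ht]; field_simp; ring
  have hu : -V x + (m + (-deriv V x * t + τ * x - τ * M)) ≤ -V (x + t) + τ * (x + t) := by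
    rw [hm]
    have : x + t - x = t := by ring
    rw [this] at t1
    linarith
  refine le_trans ?_ (exp_le_exp.2 hu)
  rw [exp_add (-V x), exp_add m]
  have := add_one_le_exp (-deriv V x * t + τ * x - τ * M)
  calc _ = exp (-V x) * (exp m * ((-deriv V x * t + τ * x - τ * M) + 1)) := by ring
    _ ≤ _ := by gcongr

/-- Some exponential tilt centres `exp (-V)`: the minimiser of `σ ↦ ∫ exp (-V x + σ x)`. -/
lemma exists_tilt {V : ℝ → ℝ} {κ₁ κ₂ : ℝ} (hV : ContDiff ℝ 2 V) (hκ : 0 < κ₁)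
    (h : ∀ y, κ₁ ≤ deriv (deriv V) y ∧ deriv (deriv V) y ≤ κ₂) :
    ∃ σ, ∫ x, x * exp (-V x + σ * x) = 0 := by
  have hlow := fun y => (h y).1
  have hκ₂ : 0 < κ₂ := hκ.trans_le ((h 0).1.trans (h 0).2)
  have hc := hV.continuous
  have hexp := expInt_potential hV hκ hlow
  set H : ℝ → ℝ := fun σ => ∫ x, exp (-V x + σ * x) with hH
  have hd : ∀ σ, HasDerivAt H (∫ x, x * exp (-V x + σ * x)) σ := by
    intro σ
    refine (hasDerivAt_integral_of_dominated_loc_of_deriv_le (Metric.ball_mem_nhds σ one_pos)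
      (F := fun σ x => exp (-V x + σ * x)) (F' := fun σ x => x * exp (-V x + σ * x))
      (bound := fun x => |x * exp ((|σ| + 1) * |x|) * exp (-V x)|)
      (Eventually.of_forall fun s => by fun_prop) ?_ (by fun_prop) ?_ ?_ ?_).2
    · simpa using tilt_integrable hV hκ hlow 0 σ
    · refine ae_of_all _ fun x s hs => ?_
      rw [norm_mul, norm_eq_abs, norm_eq_abs, abs_mul, abs_mul, mul_assoc, ← abs_mul (exp _),
        ← exp_add]
      refine mul_le_mul_of_nonneg_left ?_ (abs_nonneg x)
      rw [abs_of_pos (exp_pos _), abs_of_pos (exp_pos _), exp_le_exp]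
      have h1 : |s| ≤ |σ| + 1 := by
        rw [Metric.mem_ball, dist_eq] at hs
        linarith [abs_sub_abs_le_abs_sub s σ]
      have h2 : s * x ≤ |s| * |x| := by rw [← abs_mul]; exact le_abs_self _
      nlinarith [abs_nonneg x]
    · simpa using (expInt_pow hexp (|σ| + 1) 1).abs
    · refine ae_of_all _ fun x s _ => ?_
      have := (((hasDerivAt_id s).mul_const x).const_add (-V x)).exp
      exact this.congr_deriv (by simp [mul_comm])
  have hHc : Continuous H := continuous_iff_continuousAt.2 fun σ => (hd σ).continuousAt
  have Zpos : 0 < ∫ x, exp (-V x) := by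
    have i0 : Integrable (fun x => exp (-V x)) := by simpa using hexp 0
    exact integral_exp_pos i0
  set M := (∫ x, x * exp (-V x)) / ∫ x, exp (-V x) with hM
  have low := tilt_lower hV hκ h (M := M) (by rw [hM]; field_simp)
  obtain ⟨σ, hσ⟩ := hHc.exists_forall_le' 0 (by
    rw [Filter.eventually_iff, mem_cocompact]
    refine ⟨Metric.closedBall 0 (2 * κ₂ * |M|), isCompact_closedBall _ _, fun τ hτ => ?_⟩
    simp only [Set.mem_compl_iff, Metric.mem_closedBall, dist_zero_right, norm_eq_abs, not_le]
      at hτ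
    have h0 : H 0 = ∫ x, exp (-V x) := by simp [hH]
    refine (h0.le.trans ?_ : H 0 ≤ H τ)
    refine le_trans ?_ (low τ)
    refine le_mul_of_one_le_right Zpos.le (one_le_exp ?_)
    have h1 : -(τ * M) ≤ |τ| * |M| := by rw [← abs_mul]; exact neg_le_abs _
    have h2 : |τ| * |M| ≤ τ ^ 2 / (2 * κ₂) := by
      rw [le_div_iff₀ (by positivity), ← sq_abs]
      nlinarith [abs_nonneg τ]
    linarith)
  refine ⟨σ, ?_⟩
  rw [← (hd σ).deriv]
  exact IsLocalMin.deriv_eq_zero (Eventually.of_forall hσ)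

lemma tilted_potential {ψ : ℝ → ℝ} (hψ : ContDiff ℝ 2 ψ) (A σ c : ℝ) :
    ContDiff ℝ 2 (fun x => ψ (x + A) - σ * x + c) ∧
    ∀ x, deriv (deriv (fun x => ψ (x + A) - σ * x + c)) x = deriv (deriv ψ) (x + A) := by
  refine ⟨by fun_prop, fun x => ?_⟩
  have hd : Differentiable ℝ ψ := hψ.differentiable (by norm_num)
  have e : deriv (fun x => ψ (x + A) - σ * x + c) = fun x => deriv ψ (x + A) - σ := by
    ext y
    have h1 : HasDerivAt (fun x => ψ (x + A)) (deriv ψ (y + A)) y :=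
      (hd (y + A)).hasDerivAt.comp_add_const y A
    exact (((h1.sub ((hasDerivAt_id y).const_mul σ)).add_const c).congr_deriv (by simp)).deriv
  rw [e, deriv_sub_const, deriv_comp_add_const]

/-- Strict convexity makes the Legendre transform differentiable: its derivative at `A` is the
tilt `σ` under which `ψ` has mean `A`. -/
lemma hasDerivAt_W {ψ : ℝ → ℝ} {κ₁ κ₂ : ℝ} (hψ : ContDiff ℝ 2 ψ) (hκ : 0 < κ₁)
    (h : ∀ y, κ₁ ≤ deriv (deriv ψ) y ∧ deriv (deriv ψ) y ≤ κ₂) {A σ : ℝ}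
    (hσ : ∫ x, x * exp (-ψ (x + A) + σ * x) = 0) : HasDerivAt (W ψ) σ A := by
  have hκ₂ : 0 < κ₂ := hκ.trans_le ((h 0).1.trans (h 0).2)
  obtain ⟨cV, dV⟩ := tilted_potential hψ A σ 0
  set V : ℝ → ℝ := fun x => ψ (x + A) - σ * x + 0 with hV
  have eV : ∀ x, -ψ (x + A) + σ * x = -V x := fun x => by simp only [hV]; ring
  simp only [eV] at hσ
  have bV : ∀ y, κ₁ ≤ deriv (deriv V) y ∧ deriv (deriv V) y ≤ κ₂ := fun y => by
    rw [dV]; exact h _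
  set Z := ∫ x, exp (-V x) with hZ
  have Zpos : 0 < Z := integral_exp_pos (by
    simpa using expInt_potential cV hκ (fun y => (bV y).1) 0)
  have low := tilt_lower cV hκ bV (M := 0) (by rw [hσ, zero_mul])
  have eL : ∀ τ, log (∫ y, exp (-ψ y + (σ + τ) * y)) =
      (σ + τ) * A + log (∫ x, exp (-V x + τ * x)) := by
    intro τ
    have : ∀ x, exp (-ψ (x + A) + (σ + τ) * (x + A)) =
        exp ((σ + τ) * A) * exp (-V x + τ * x) := fun x => by
      rw [← exp_add]; congr 1; simp only [hV]; ring
    rw [← integral_add_right_eq_self _ A]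
    simp only [this]
    rw [integral_const_mul, log_mul (exp_pos _).ne', log_exp]
    have := low τ
    have : 0 < Z * exp (τ ^ 2 / (2 * κ₂) + τ * 0) := by positivity
    linarith [low τ]
  have lowL : ∀ τ, log Z + τ ^ 2 / (2 * κ₂) ≤ log (∫ x, exp (-V x + τ * x)) := by
    intro τ
    rw [← log_exp (τ ^ 2 / (2 * κ₂)), ← log_mul Zpos.ne' (exp_pos _).ne']
    have := low τ
    rw [mul_zero, add_zero] at this
    exact log_le_log (by positivity) this
  have up : ∀ B s, s * B - log (∫ y, exp (-ψ y + s * y)) ≤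
      σ * (B - A) - log Z + κ₂ / 2 * (B - A) ^ 2 := by
    intro B s
    have e1 := eL (s - σ)
    rw [show σ + (s - σ) = s by ring] at e1
    rw [e1]
    have e2 := lowL (s - σ)
    have e3 : (s - σ) * (B - A) ≤ (s - σ) ^ 2 / (2 * κ₂) + κ₂ / 2 * (B - A) ^ 2 := by
      have : 0 ≤ ((s - σ) - κ₂ * (B - A)) ^ 2 / (2 * κ₂) := by positivity
      have e4 : ((s - σ) - κ₂ * (B - A)) ^ 2 / (2 * κ₂) =
        (s - σ) ^ 2 / (2 * κ₂) - (s - σ) * (B - A) + κ₂ / 2 * (B - A) ^ 2 := by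
        field_simp; ring
      linarith
    linarith
  have upW : ∀ B, W ψ B ≤ σ * (B - A) - log Z + κ₂ / 2 * (B - A) ^ 2 := fun B =>
    ciSup_le (up B)
  have lowW : ∀ B, σ * (B - A) - log Z ≤ W ψ B := by
    intro B
    refine le_trans ?_ (le_ciSup (f := fun s => s * B - log (∫ y, exp (-ψ y + s * y)))
      ⟨_, Set.forall_mem_range.2 (up B)⟩ σ)
    have e1 := eL 0
    simp only [add_zero, zero_mul] at e1
    simp only [e1]
    linarith
  have WA : W ψ A = -log Z := le_antisymm (by simpa using upW A) (by simpa using lowW A)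
  rw [hasDerivAt_iff_isLittleO]
  refine Asymptotics.IsBigO.trans_isLittleO (g := fun B => (B - A) ^ 2) ?_ ?_
  · refine Asymptotics.IsBigO.of_bound (κ₂ / 2) (Eventually.of_forall fun B => ?_)
    rw [norm_eq_abs, norm_eq_abs, abs_of_nonneg (sq_nonneg (B - A)), WA, smul_eq_mul, abs_le]
    have := upW B
    have := lowW B
    constructor <;> nlinarith [sq_nonneg (B - A)]
  · have := (Asymptotics.isLittleO_pow_id (𝕜 := ℝ) one_lt_two)
    have t : Tendsto (fun B => B - A) (nhds A) (nhds 0) := by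
      simpa using (continuous_id.sub continuous_const).tendsto (f := fun B : ℝ => B - A) A
    exact this.comp_tendsto t

/-! ### Partition functions as convolution powers -/

/-- The chain configuration with `m` free interior atoms `u` and end atoms at `a` and `b`. -/
def path (m : ℕ) (a b : ℝ) (u : Fin m → ℝ) : ℕ → ℝ := fun i =>
  if h : 0 < i ∧ i < m + 1 then u ⟨i - 1, by omega⟩ else if i = 0 then a else b

/-- The energy of the `m + 1` bonds of the configuration `path m a b u`. -/
def pathE (ψ : ℝ → ℝ) (m : ℕ) (a b : ℝ) (u : Fin m → ℝ) : ℝ :=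
  ∑ i ∈ Finset.range (m + 1), ψ (path m a b u (i + 1) - path m a b u i)

lemma path_cons (m : ℕ) (a b y : ℝ) (u : Fin m → ℝ) (i : ℕ) :
    path (m + 1) a b (Fin.cons y u : Fin (m + 1) → ℝ) (i + 1) = path m y b u i := by
  unfold path
  rcases i with _ | i
  · simp
  · by_cases h : i + 1 < m + 1
    · have h' : i + 1 + 1 < m + 1 + 1 := by omega
      simp only [h, h', Nat.succ_pos, and_self, dif_pos]
      exact Fin.cons_succ (α := fun _ => ℝ) y u ⟨i, by omega⟩
    · have h' : ¬ i + 1 + 1 < m + 1 + 1 := by omega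
      simp only [h, h', and_false, dif_neg, not_false_eq_true]
      simp

lemma pathE_cons (ψ : ℝ → ℝ) (m : ℕ) (a b y : ℝ) (u : Fin m → ℝ) :
    pathE ψ (m + 1) a b (Fin.cons y u : Fin (m + 1) → ℝ) = pathE ψ m y b u + ψ (y - a) := by
  unfold pathE
  rw [Finset.sum_range_succ']
  simp only [path_cons]
  simp [path]

lemma path_continuous (m : ℕ) (a b : ℝ) (i : ℕ) : Continuous fun u => path m a b u i := by
  unfold path
  split_ifs <;> fun_prop

lemma pathE_continuous {ψ : ℝ → ℝ} (hψ : Continuous ψ) (m : ℕ) (a b : ℝ) :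
    Continuous (pathE ψ m a b) := by
  unfold pathE
  exact continuous_finsetSum _ fun i _ =>
    hψ.comp ((path_continuous m a b _).sub (path_continuous m a b _))

/-- Integrating out all atoms but the first. -/
lemma lintegral_peel {ψ p : ℝ → ℝ} (hψ : Continuous ψ) (hp : Continuous p) (m : ℕ) (a b : ℝ) :
    ∫⁻ u : Fin (m + 1) → ℝ, ENNReal.ofReal (exp (-pathE ψ (m + 1) a b u
      - p (path (m + 1) a b u 1))) =
    ∫⁻ y : ℝ, ENNReal.ofReal (exp (-ψ (y - a) - p y)) *
      ∫⁻ u : Fin m → ℝ, ENNReal.ofReal (exp (-pathE ψ m y b u)) := by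
  have hE := pathE_continuous hψ (m + 1) a b
  have hpath := path_continuous (m + 1) a b 1
  have hm : Measurable fun u : Fin (m + 1) → ℝ => ENNReal.ofReal (exp (-pathE ψ (m + 1) a b u
      - p (path (m + 1) a b u 1))) := by
    refine Continuous.measurable (ENNReal.continuous_ofReal.comp ?_)
    fun_prop
  have mp := (volume_preserving_piFinSuccAbove (fun _ : Fin (m + 1) => ℝ) 0).symm
  rw [← mp.lintegral_comp hm, Measure.volume_eq_prod, lintegral_prod]
  swap
  · exact (hm.comp mp.measurable).aemeasurable
  refine lintegral_congr fun y => ?_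
  have hE' := pathE_continuous hψ m y b
  have hm' : Measurable fun u => ENNReal.ofReal (exp (-pathE ψ m y b u)) :=
    (ENNReal.continuous_ofReal.comp (by fun_prop)).measurable
  rw [← lintegral_const_mul _ hm']
  refine lintegral_congr fun u => ?_
  have e : (MeasurableEquiv.piFinSuccAbove (fun _ : Fin (m + 1) => ℝ) 0).symm (y, u) =
      (Fin.cons y u : Fin (m + 1) → ℝ) := by
    simp [MeasurableEquiv.piFinSuccAbove_symm_apply]
    rfl
  rw [e, pathE_cons, ← ENNReal.ofReal_mul (exp_pos _).le, ← exp_add]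
  have e1 : path (m + 1) a b (Fin.cons y u : Fin (m + 1) → ℝ) 1 = y :=
    (path_cons m a b y u 0).trans (by simp [path])
  rw [e1]
  congr 2
  ring

/-- When `exp (-ψ)` is a tilted and shifted multiple of `φ`, the partition function of the chain is,
up to explicit factors, a convolution power of `φ`. -/
lemma lintegral_path {ψ φ : ℝ → ℝ} {a v Z A σ : ℝ} (hψ : Continuous ψ) (h : BondDensity a v φ)
    (hZ : 0 < Z) (hφ : ∀ y, exp (-ψ y) = Z * φ (y - A) * exp (-σ * (y - A))) (m : ℕ) (p b : ℝ) :
    ∫⁻ u : Fin m → ℝ, ENNReal.ofReal (exp (-pathE ψ m p b u)) =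
      ENNReal.ofReal (Z ^ (m + 1) * exp (-σ * (b - p - (m + 1) * A)) *
        fs φ m (b - p - (m + 1) * A)) := by
  induction m generalizing p with
  | zero =>
    have e : ∀ u : Fin 0 → ℝ, pathE ψ 0 p b u = ψ (b - p) := fun u => by simp [pathE, path]
    simp only [e, lintegral_const, hφ]
    rw [volume_pi, Measure.pi_univ, Finset.univ_eq_empty, Finset.prod_empty, mul_one]
    congr 1
    simp only [fs, CharP.cast_eq_zero, zero_add, pow_one, one_mul]
    ring
  | succ m ih =>
    have hp := lintegral_peel hψ (p := fun _ => 0) continuous_const m p b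
    simp only [sub_zero] at hp
    rw [hp]
    have hg := h.fs_good m
    obtain ⟨B, hB⟩ := hg.bdd
    have hIntg : ∀ s, Integrable (fun x => φ x * fs φ m (s - x)) := fun s =>
      integrable_refl_of_bdd' h.good.int0 hg.diff.continuous hB s
    set s := b - p - ((m + 1 : ℕ) + 1) * A with hs
    set c := Z ^ (m + 2) * exp (-σ * s) with hc
    have e : ∀ y, ENNReal.ofReal (exp (-ψ (y - p))) * ∫⁻ u : Fin m → ℝ,
        ENNReal.ofReal (exp (-pathE ψ m y b u)) =
        ENNReal.ofReal (c * (φ (y - (p + A)) * fs φ m (s - (y - (p + A))))) := by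
      intro y
      rw [ih, ← ENNReal.ofReal_mul (exp_pos _).le, hφ]
      congr 1
      have e1 : b - y - (m + 1) * A = s - (y - (p + A)) := by rw [hs]; push_cast; ring
      have e2 : y - p - A = y - (p + A) := by ring
      have e3 : exp (-σ * s) = exp (-σ * (y - (p + A))) * exp (-σ * (s - (y - (p + A)))) := by
        rw [← exp_add]; congr 1; ring
      rw [e1, e2, hc, e3]
      ring
    simp only [e]
    rw [← ofReal_integral_eq_lintegral_ofReal
      (((hIntg s).comp_sub_right (p + A)).const_mul c) (ae_of_all _ fun y => ?_),
      integral_const_mul, integral_sub_right_eq_self (fun x => φ x * fs φ m (s - x))]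
    · rfl
    · have := h.good.pos (y - (p + A))
      have := hg.pos (s - (y - (p + A)))
      simp only [Pi.zero_apply]
      positivity

/-- The partition function of the chain with a defect on the first bond. The total tilt cancels because
the chain has mean bond length exactly `A`. -/
lemma partition_function {ψ φ P : ℝ → ℝ} {a v Z A σ : ℝ} (hψ : Continuous ψ) (hP : Continuous P)
    (h : BondDensity a v φ) (hZ : 0 < Z)
    (hφ : ∀ y, exp (-ψ y) = Z * φ (y - A) * exp (-σ * (y - A))) (m : ℕ) :
    ∫ u : Fin (m + 2 - 1) → ℝ, exp (-(chainE (fun _ => ψ) (m + 2) ((m + 2 : ℕ) * A) u)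
      - P (bc (m + 2) ((m + 2 : ℕ) * A) u 1)) =
    Z ^ (m + 1) * ∫ x, exp (-(ψ (x + A) + P (x + A)) + σ * x) * fs φ m (-x) := by
  have hc := (h.fs_good m).diff.continuous
  have hE := pathE_continuous hψ (m + 1) 0 ((m + 2 : ℕ) * A)
  have hpath := path_continuous (m + 1) 0 ((m + 2 : ℕ) * A) 1
  change ∫ u : Fin (m + 1) → ℝ, exp (-pathE ψ (m + 1) 0 ((m + 2 : ℕ) * A) u
    - P (path (m + 1) 0 ((m + 2 : ℕ) * A) u 1)) = _
  rw [integral_eq_lintegral_of_nonneg_ae (ae_of_all _ fun u => (exp_pos _).le) (by fun_prop),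
    lintegral_peel hψ hP, ← integral_const_mul,
    ← integral_sub_right_eq_self (fun x => Z ^ (m + 1) * _) A,
    integral_eq_lintegral_of_nonneg_ae (ae_of_all _ fun y => ?_) (by fun_prop)]
  · congr 1
    refine lintegral_congr fun y => ?_
    rw [lintegral_path hψ h hZ hφ, ← ENNReal.ofReal_mul (exp_pos _).le]
    congr 1
    have e1 : ((m + 2 : ℕ) : ℝ) * A - y - (m + 1) * A = -(y - A) := by push_cast; ring
    rw [e1, sub_add_cancel, sub_zero, exp_add, show -(ψ y + P y) = -ψ y - P y by ring,
      show -σ * -(y - A) = σ * (y - A) by ring]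
    ring
  · have := (h.fs_good m).pos (-(y - A))
    simp only [Pi.zero_apply]
    positivity

/-! ### The thermodynamic limit -/

/-- thermodynamic limit of the defect-formation free energy with rate `1/N`. -/
theorem thermodynamic_limit_defect_formation_free_energy
    (ψ P : ℝ → ℝ) (κ₁ κ₂ ς₁ ς₂ : ℝ)
    (hψ : ContDiff ℝ 2 ψ) (hP : ContDiff ℝ 2 P)
    (hκ₁ : 0 < κ₁) (hκ : κ₁ ≤ κ₂) (hς₁ : 0 < ς₁) (hς : ς₁ ≤ ς₂)
    (hψ'' : ∀ y : ℝ, κ₁ ≤ deriv (deriv ψ) y ∧ deriv (deriv ψ) y ≤ κ₂)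
    (hψP'' : ∀ y : ℝ, ς₁ ≤ deriv (deriv (fun z => ψ z + P z)) y ∧
        deriv (deriv (fun z => ψ z + P z)) y ≤ ς₂)
    (A : ℝ) :
    Tendsto
      (fun N : ℕ => freeEnergy (fun _ => ψ) P N A - freeEnergy (fun _ => ψ) (fun _ => 0) N A)
      atTop
      (nhds (- Real.log
        ((∫ y : ℝ, Real.exp (-(ψ y + P y) + deriv (W ψ) A * y)) /
         (∫ y : ℝ, Real.exp (-ψ y + deriv (W ψ) A * y))))) ∧
    ∃ C > 0, ∀ N : ℕ, 2 ≤ N →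
      |(freeEnergy (fun _ => ψ) P N A - freeEnergy (fun _ => ψ) (fun _ => 0) N A) -
        (- Real.log
          ((∫ y : ℝ, Real.exp (-(ψ y + P y) + deriv (W ψ) A * y)) /
           (∫ y : ℝ, Real.exp (-ψ y + deriv (W ψ) A * y))))| ≤ C / N := by
  obtain ⟨σ, hσ⟩ : ∃ σ, ∫ x, x * exp (-ψ (x + A) + σ * x) = 0 := by
    obtain ⟨c0, d0⟩ := tilted_potential hψ A 0 0
    obtain ⟨σ, hσ⟩ := exists_tilt c0 hκ₁ (fun y => by rw [d0]; exact hψ'' _)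
    exact ⟨σ, by simpa using hσ⟩
  rw [(hasDerivAt_W hψ hκ₁ hψ'' hσ).deriv]
  set Z := ∫ x, exp (-ψ (x + A) + σ * x) with hZ
  have Zpos : 0 < Z := by
    obtain ⟨c0, d0⟩ := tilted_potential hψ A σ 0
    have := expInt_potential c0 hκ₁ (fun y => by rw [d0]; exact (hψ'' _).1) 0
    refine integral_exp_pos (this.congr (ae_of_all _ fun x => ?_))
    simp only [zero_mul, exp_zero, mul_one]
    congr 1
    ring
  obtain ⟨cV, dV⟩ := tilted_potential hψ A σ (log Z)
  set V : ℝ → ℝ := fun x => ψ (x + A) - σ * x + log Z with hV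
  have eV : ∀ x, exp (-V x) = Z⁻¹ * exp (-ψ (x + A) + σ * x) := by
    intro x
    conv_rhs => rw [← exp_log Zpos]
    rw [← exp_neg, ← exp_add]
    congr 1
    simp only [hV]
    ring
  obtain ⟨v, hv, hbond⟩ := bond_of_potential cV hκ₁ (fun y => by rw [dV]; exact hψ'' _)
    (by simp only [eV]; rw [integral_const_mul, ← hZ]; field_simp)
    (by
      have : ∀ x, x * exp (-V x) = Z⁻¹ * (x * exp (-ψ (x + A) + σ * x)) := fun x => by
        rw [eV]; ring
      simp only [this]
      rw [integral_const_mul, hσ, mul_zero])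
  set φ : ℝ → ℝ := fun x => exp (-V x) with hφ
  set k : ℝ → ℝ := fun x => exp (-(ψ (x + A) + P (x + A)) + σ * x) with hk
  have kexp : ∀ K, Integrable (fun x => k x * exp (K * |x|)) := by
    obtain ⟨c0, d0⟩ := tilted_potential (hψ.add hP) A σ 0
    intro K
    refine (expInt_potential c0 hς₁ (fun y => by rw [d0]; exact (hψP'' _).1) K).congr
      (ae_of_all _ fun x => ?_)
    simp only [hk]
    congr 2
    ring
  have k0 : Integrable k := by simpa using kexp 0
  set R := ∫ x, k x with hR
  have Rpos : 0 < R := integral_exp_pos k0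
  obtain ⟨C, hC⟩ := core hbond hv kexp
  set r : ℕ → ℝ := fun n => (∫ x, k x * fs φ n (-x)) / (∫ x, φ x * fs φ n (-x)) with hr
  have hbond' : ∀ y, exp (-ψ y) = Z * φ (y - A) * exp (-σ * (y - A)) := by
    intro y
    simp only [hφ, eV, sub_add_cancel]
    rw [exp_add, ← mul_assoc, mul_inv_cancel₀ Zpos.ne', one_mul, mul_assoc, ← exp_add]
    simp
  -- undoing the shift by `A` costs the same factor `exp (σ A)` in numerator and denominator
  have lim_eq : (∫ y : ℝ, exp (-(ψ y + P y) + σ * y)) / (∫ y : ℝ, exp (-ψ y + σ * y)) = R / Z := by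
    rw [← integral_add_right_eq_self _ A, ← integral_add_right_eq_self
      (fun y => exp (-ψ y + σ * y)) A]
    have e1 : ∀ x, exp (-(ψ (x + A) + P (x + A)) + σ * (x + A)) = exp (σ * A) * k x := fun x => by
      rw [← exp_add]; congr 1; ring
    have e2 : ∀ x, exp (-ψ (x + A) + σ * (x + A)) =
        exp (σ * A) * exp (-ψ (x + A) + σ * x) := fun x => by
      rw [← exp_add]; congr 1; ring
    simp only [e1, e2]
    rw [integral_const_mul, integral_const_mul, mul_div_mul_left _ _ (exp_pos _).ne']
  rw [lim_eq]
  have num_pos : ∀ (g : ℝ → ℝ), Integrable g → (∀ x, 0 < g x) → ∀ n,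
      0 < ∫ x, g x * fs φ n (-x) := by
    intro g hg gpos n
    have hf := hbond.fs_good n
    obtain ⟨B, hB⟩ := hf.bdd
    refine integral_pos_of_pos ?_ fun x => mul_pos (gpos x) (hf.pos _)
    simpa using integrable_refl_of_bdd' hg hf.diff.continuous hB 0
  have kpos := num_pos k k0 fun x => exp_pos _
  have φpos := num_pos φ hbond.good.int0 hbond.good.pos
  have G_eq : ∀ n : ℕ, (freeEnergy (fun _ => ψ) P (n + 2) A
      - freeEnergy (fun _ => ψ) (fun _ => 0) (n + 2) A) - (-log (R / Z)) = -(log (r n) - log R) := by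
    intro n
    unfold freeEnergy
    rw [partition_function hψ.continuous hP.continuous hbond Zpos hbond' n,
      partition_function hψ.continuous continuous_const hbond Zpos hbond' n]
    have e : ∀ x, exp (-(ψ (x + A) + 0) + σ * x) * fs φ n (-x) = Z * (φ x * fs φ n (-x)) := by
      intro x
      simp only [hφ, eV, add_zero]
      field_simp
    simp only [e]
    rw [integral_const_mul, log_mul (by positivity) (kpos n).ne',
      log_mul (by positivity) (mul_pos Zpos (φpos n)).ne', log_mul Zpos.ne' (φpos n).ne',
      log_div Rpos.ne' Zpos.ne', hr, log_div (kpos n).ne' (φpos n).ne']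
    ring
  have r_bigO : (fun n => r n - R) =O[atTop] fun n : ℕ => 1 / ((n + 1 : ℕ) : ℝ) := by
    refine Asymptotics.IsBigO.of_bound C (hC.mono fun n hn => ?_)
    rw [norm_eq_abs, norm_of_nonneg (by positivity), mul_one_div]
    exact hn
  have inv_tendsto : Tendsto (fun n : ℕ => 1 / ((n + 1 : ℕ) : ℝ)) atTop (nhds 0) := by
    simpa using tendsto_one_div_add_atTop_nhds_zero_nat (𝕜 := ℝ)
  have r_tendsto : Tendsto r atTop (nhds R) := by
    simpa using (r_bigO.trans_tendsto inv_tendsto).add_const R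
  have log_bigO : (fun n => log (r n) - log R) =O[atTop] fun n : ℕ => 1 / ((n + 1 : ℕ) : ℝ) :=
    ((hasDerivAt_log Rpos.ne').isBigO_sub.comp_tendsto r_tendsto).trans r_bigO
  have G_bigO : (fun N : ℕ => (freeEnergy (fun _ => ψ) P N A
      - freeEnergy (fun _ => ψ) (fun _ => 0) N A) - (-log (R / Z))) =O[atTop]
      fun N : ℕ => 1 / (N : ℝ) := by
    refine ((log_bigO.comp_tendsto (tendsto_sub_atTop_nat 2)).neg_left.congr' ?_
      EventuallyEq.rfl).trans ?_
    · filter_upwards [eventually_ge_atTop 2] with N hN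
      have := G_eq (N - 2)
      rw [Nat.sub_add_cancel hN] at this
      rw [this]
      rfl
    -- `1 / (N - 1) ≤ 2 / N` for `N ≥ 2`
    · refine Asymptotics.IsBigO.of_bound 2 ?_
      filter_upwards [eventually_ge_atTop 2] with N hN
      simp only [Function.comp]
      have hN' : (2 : ℝ) ≤ N := by exact_mod_cast hN
      have e : ((N - 2 + 1 : ℕ) : ℝ) = N - 1 := by
        have : N - 2 + 1 = N - 1 := by omega
        rw [this]; push_cast [show 1 ≤ N by omega]; ring
      rw [e, norm_of_nonneg (div_nonneg zero_le_one (by linarith)),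
        norm_of_nonneg (by positivity : (0 : ℝ) ≤ 1 / N), mul_one_div,
        div_le_div_iff₀ (by linarith) (by linarith)]
      linarith
  constructor
  · have := (G_bigO.trans_tendsto tendsto_one_div_atTop_nhds_zero_nat).add_const (-log (R / Z))
    simpa using this
  · obtain ⟨C', C'pos, hC'⟩ := Asymptotics.bound_of_isBigO_nat_atTop G_bigO
    refine ⟨C', C'pos, fun N hN => ?_⟩
    have hN' : (0 : ℝ) < N := by exact_mod_cast (by omega : 0 < N)
    have := hC' (x := N) (by positivity)
    rwa [norm_eq_abs, norm_of_nonneg (by positivity : (0 : ℝ) ≤ 1 / N), mul_one_div] at this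
end
end

section
/- With F̃_N(A), W̃_N(A), σ*, the measures μ̃_i and the density g̃_{N,A} as defined in the context, the identity F̃_N(A) = (1/2)·log N + N·W̃_N(A) − log g̃_{N,A}(0) holds. -/
/-!
The free energy is a partition function over chains with fixed end point `N A`, and this is, up to
explicit factors, the density at `N A` of a sum of `N` independent Gibbs variables.

In the increment variables `x_i = u_i - u_{i-1}`, a unitriangular linear change of coordinates
(`measurePreserving_increments`), the product Gibbs density `∏ Z_i⁻¹ exp(σ x_i - φ_i(x_i))` becomes
`(∏ Z_i)⁻¹ exp(σ s) exp(-chainE)`, with `s = ∑ x_i` the end point, since the linear terms telescope.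
Integrating out the interior positions gives the density of `∑ x_i`
(`lintegral_sum_gibbs`). Differentiating the log-partition functions shows that maximality of
`σ*` forces the means to sum to `N A` (`sum_gibbsMean_eq`), so that the rescaled centred sum
vanishes exactly when `s = N A`, and rescaling contributes a factor `√N`.

A density is determined only almost everywhere. The value at `0` is identified because both the
given density and the computed one are continuous; for the latter this is dominated convergence
with a majorant that does not depend on the end point: the last bond energy is bounded below,
and the other bonds involve the interior positions only (`exists_chain_majorant`). Taking
logarithms of `density_zero_eq` gives the identity.
-/

noncomputable section

open MeasureTheory Real Filter

/-- The free energy `F̃_N(A) = -log ∫_{ℝ^{N-1}} exp(-∑_{i=1}^N ψ̃_i(u_i - u_{i-1})) du`,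
with `u 0 = 0`, `u N = N A`. -/
def freeEnergyTilde (φ : ℕ → ℝ → ℝ) (N : ℕ) (A : ℝ) : ℝ :=
  - Real.log (∫ u : Fin (N - 1) → ℝ, Real.exp (-(chainE φ N (N * A) u)))

/-- `W̃_N(A) = sup_σ { σ A - (1/N) ∑_{i=1}^N log ∫ exp(-ψ̃_i(y) + σ y) dy }`. -/
def WNtilde (φ : ℕ → ℝ → ℝ) (N : ℕ) (A : ℝ) : ℝ :=
  ⨆ σ : ℝ, (σ * A -
    (N : ℝ)⁻¹ * ∑ i ∈ Finset.Icc 1 N, Real.log (∫ y : ℝ, Real.exp (-φ i y + σ * y)))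

/-- The one-dimensional Gibbs measure `μ̃_i^σ(dy) = Z⁻¹ exp(σ y - ψ̃_i y) dy`. -/
def gibbs (f : ℝ → ℝ) (σ : ℝ) : Measure ℝ :=
  volume.withDensity fun y =>
    ENNReal.ofReal ((∫ z : ℝ, Real.exp (σ * z - f z))⁻¹ * Real.exp (σ * y - f y))

/-- The mean of the Gibbs measure `μ̃_i^σ`. -/
def gibbsMean (f : ℝ → ℝ) (σ : ℝ) : ℝ :=
  (∫ z : ℝ, z * Real.exp (σ * z - f z)) / (∫ z : ℝ, Real.exp (σ * z - f z))

/-! ### One-dimensional estimates -/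

/-- Strong convexity gives a quadratic lower bound, also after a linear tilt. -/
lemma exists_quadratic_lower_bound {f : ℝ → ℝ} {κ : ℝ} (hκ : 0 < κ) (hf : ContDiff ℝ 2 f)
    (hf2 : ∀ y, κ ≤ deriv (deriv f) y) (σ : ℝ) :
    ∃ C : ℝ, ∀ y, κ / 4 * y ^ 2 - C ≤ f y - σ * y := by
  have hd : Differentiable ℝ f := hf.differentiable (by norm_num)
  have hd1 : Differentiable ℝ (deriv f) := by
    have : ContDiff ℝ 1 (deriv f) := by
      have := (contDiff_succ_iff_deriv (n := 1) (f := f)).1 (by simpa [one_add_one_eq_two] using hf)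
      exact this.2.2
    exact this.differentiable (by norm_num)
  have hk : ∀ y, HasDerivAt (fun y => f y - κ / 2 * y ^ 2) (deriv f y - κ * y) y := by
    intro y
    exact ((hd y).hasDerivAt.sub (((hasDerivAt_id y).pow 2).const_mul (κ / 2))).congr_deriv
      (by simp; ring)
  have hk' : deriv (fun y => f y - κ / 2 * y ^ 2) = fun y => deriv f y - κ * y :=
    funext fun y => (hk y).deriv
  have hk2 : ∀ y, HasDerivAt (fun y => deriv f y - κ * y) (deriv (deriv f) y - κ) y := by
    intro y
    exact ((hd1 y).hasDerivAt.sub ((hasDerivAt_id y).const_mul κ)).congr_deriv (by simp)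
  have hconv : ConvexOn ℝ Set.univ (fun y => f y - κ / 2 * y ^ 2) := by
    apply convexOn_univ_of_deriv2_nonneg
    · exact fun y => (hk y).differentiableAt
    · rw [hk']; exact fun y => (hk2 y).differentiableAt
    · intro y
      simp only [Function.iterate_succ, Function.iterate_zero, Function.comp, id]
      rw [hk', (hk2 y).deriv]
      linarith [hf2 y]
  have htan : ∀ y, f 0 + deriv f 0 * y ≤ f y - κ / 2 * y ^ 2 := by
    intro y
    rcases lt_trichotomy y 0 with h | h | h
    · have := hconv.slope_le_deriv (Set.mem_univ y) (Set.mem_univ 0) h (hk 0).differentiableAt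
      rw [(hk 0).deriv, slope_def_field, div_le_iff₀ (by linarith)] at this
      nlinarith
    · simp [h]
    · have := hconv.deriv_le_slope (Set.mem_univ 0) (Set.mem_univ y) h (hk 0).differentiableAt
      rw [(hk 0).deriv, slope_def_field, le_div_iff₀ (by linarith)] at this
      nlinarith
  refine ⟨(deriv f 0 - σ) ^ 2 / κ - f 0, fun y => ?_⟩
  have h1 := htan y
  have h2 : 0 ≤ κ / 4 * y ^ 2 + (deriv f 0 - σ) * y + (deriv f 0 - σ) ^ 2 / κ := by
    have : κ / 4 * y ^ 2 + (deriv f 0 - σ) * y + (deriv f 0 - σ) ^ 2 / κ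
        = (κ / 2 * y + (deriv f 0 - σ)) ^ 2 / κ := by field_simp; ring
    rw [this]; positivity
  linarith

lemma integrable_exp_tilt {f : ℝ → ℝ} {κ : ℝ} (hκ : 0 < κ) (hf : ContDiff ℝ 2 f)
    (hf2 : ∀ y, κ ≤ deriv (deriv f) y) (σ : ℝ) :
    Integrable fun y => Real.exp (σ * y - f y) := by
  obtain ⟨C, hC⟩ := exists_quadratic_lower_bound hκ hf hf2 σ
  have hfc := hf.continuous
  refine ((integrable_exp_neg_mul_sq (b := κ / 4) (by positivity)).const_mul (Real.exp C)).mono'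
    (by fun_prop : Continuous _).aestronglyMeasurable (Eventually.of_forall fun y => ?_)
  rw [Real.norm_of_nonneg (Real.exp_pos _).le, ← Real.exp_add]
  exact Real.exp_le_exp.2 (by linarith [hC y])

/-- The derivative of the log-partition function is the Gibbs mean. -/
lemma hasDerivAt_log_partition {f : ℝ → ℝ} {κ : ℝ} (hκ : 0 < κ) (hf : ContDiff ℝ 2 f)
    (hf2 : ∀ y, κ ≤ deriv (deriv f) y) (σ : ℝ) :
    HasDerivAt (fun σ => Real.log (∫ y : ℝ, Real.exp (-f y + σ * y))) (gibbsMean f σ) σ := by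
  have hfc := hf.continuous
  set μ : Measure ℝ := volume.withDensity fun y => ENNReal.ofReal (Real.exp (-f y)) with hμ
  have hint : ∀ k : ℝ → ℝ, ∫ y, k y ∂μ = ∫ y, k y * Real.exp (-f y) := by
    intro k
    rw [hμ, integral_withDensity_eq_integral_toReal_smul (by fun_prop) (by simp)]
    congr 1; ext y
    rw [ENNReal.toReal_ofReal (Real.exp_pos _).le, smul_eq_mul, mul_comm]
  have hset : ProbabilityTheory.integrableExpSet id μ = Set.univ := by
    ext t
    simp only [ProbabilityTheory.integrableExpSet, Set.mem_ofPred_eq, Set.mem_univ, iff_true, id]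
    rw [hμ, integrable_withDensity_iff (by fun_prop) (by simp)]
    refine (integrable_exp_tilt hκ hf hf2 t).congr (Eventually.of_forall fun y => ?_)
    simp only
    rw [ENNReal.toReal_ofReal (Real.exp_pos _).le, ← Real.exp_add, sub_eq_add_neg]
  have h := ProbabilityTheory.hasDerivAt_mgf (X := id) (μ := μ) (t := σ) (by simp [hset])
  have hm : ProbabilityTheory.mgf id μ = fun σ => ∫ y : ℝ, Real.exp (-f y + σ * y) := by
    ext t
    rw [ProbabilityTheory.mgf, hint]
    congr 1; ext y
    rw [← Real.exp_add, add_comm]; rfl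
  rw [hm, hint] at h
  have hI := integrable_exp_tilt hκ hf hf2 σ
  have e : ∀ y, -f y + σ * y = σ * y - f y := fun y => by ring
  have hpos : 0 < ∫ y : ℝ, Real.exp (-f y + σ * y) := by
    simp only [e]; exact integral_exp_pos hI
  convert h.log hpos.ne' using 1
  simp only [gibbsMean, e, id, mul_assoc, ← Real.exp_add, sub_eq_add_neg]

/-! ### The product of Gibbs measures -/

lemma pi_withDensity_ofReal {m : ℕ} (p : Fin m → ℝ → ℝ) (hp : ∀ i, Integrable (p i))
    (hp0 : ∀ i y, 0 ≤ p i y) :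
    (Measure.pi fun i => (volume : Measure ℝ).withDensity fun y => ENNReal.ofReal (p i y))
      = volume.withDensity fun x : Fin m → ℝ => ENNReal.ofReal (∏ i, p i (x i)) := by
  have : ∀ i, IsFiniteMeasure ((volume : Measure ℝ).withDensity fun y => ENNReal.ofReal (p i y)) :=
    fun i => isFiniteMeasure_withDensity_ofReal (hp i).2
  refine Measure.pi_eq fun s hs => ?_
  rw [withDensity_apply _ (MeasurableSet.univ_pi hs), volume_pi, Measure.restrict_pi_pi]
  rw [← ofReal_integral_eq_lintegral_ofReal, integral_fintype_prod_eq_prod,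
    ENNReal.ofReal_prod_of_nonneg]
  · refine Finset.prod_congr rfl fun i _ => ?_
    rw [withDensity_apply _ (hs i),
      ofReal_integral_eq_lintegral_ofReal (hp i).restrict (Eventually.of_forall (hp0 i))]
  · exact fun i _ => integral_nonneg (hp0 i)
  · exact Integrable.fintype_prod_dep fun i => (hp i).restrict
  · exact Eventually.of_forall fun x => Finset.prod_nonneg fun i _ => hp0 i _

/-! ### The increment map -/

/-- The increments `u_i - u_{i-1}` of a chain `u` started at `0`; indices of `Fin m` are shifted
down by one, so that `u 0` is its own increment. -/
def increments (m : ℕ) : (Fin m → ℝ) →ₗ[ℝ] (Fin m → ℝ) :=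
  LinearMap.pi fun i => LinearMap.proj i -
    if h : (i : ℕ) = 0 then 0 else LinearMap.proj (⟨i - 1, by omega⟩ : Fin m)

lemma increments_apply (m : ℕ) (u : Fin m → ℝ) (i : Fin m) :
    increments m u i = u i - if h : (i : ℕ) = 0 then 0 else u ⟨i - 1, by omega⟩ := by
  simp only [increments, LinearMap.pi_apply, LinearMap.sub_apply, LinearMap.proj_apply]
  split_ifs <;> simp

/-- The increment map is unitriangular. -/
lemma det_increments (m : ℕ) : LinearMap.det (increments m) = 1 := by
  rw [← LinearMap.det_toMatrix', Matrix.det_of_isLowerTriangular]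
  · refine Finset.prod_eq_one fun i _ => ?_
    rw [LinearMap.toMatrix'_apply, increments_apply]
    split_ifs with h
    · simp
    · have : (⟨i - 1, by omega⟩ : Fin m) ≠ i := fun h' => by
        have := congrArg Fin.val h'; simp at this; omega
      simp [this]
  · intro i j hij
    have hij : i < j := hij
    rw [LinearMap.toMatrix'_apply, increments_apply]
    split_ifs with h
    · simp [hij.ne]
    · have : (⟨i - 1, by omega⟩ : Fin m) ≠ j := fun h' => by
        have := congrArg Fin.val h'
        have h2 : (i : ℕ) < j := hij
        simp at this; omega
      simp [hij.ne, this]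

lemma measurePreserving_increments (m : ℕ) : MeasurePreserving (increments m) := by
  refine ⟨(LinearMap.continuous_of_finiteDimensional _).measurable, ?_⟩
  rw [Real.map_linearMap_volume_pi_eq_smul_volume_pi (by simp [det_increments])]
  simp [det_increments]

/-! ### The chain partition function -/

lemma bc_zero (n : ℕ) (b : ℝ) (v : Fin n → ℝ) : bc (n + 1) b v 0 = 0 := by simp [bc]

lemma bc_last (n : ℕ) (b : ℝ) (v : Fin n → ℝ) : bc (n + 1) b v (n + 1) = b := by simp [bc]

/-- The increments of the chain prescribed by the boundary conditions. -/
lemma increments_snoc (n : ℕ) (b : ℝ) (v : Fin n → ℝ) (i : Fin (n + 1)) :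
    increments (n + 1) (Fin.snoc (α := fun _ => ℝ) v b) i
      = bc (n + 1) b v (i + 1) - bc (n + 1) b v i := by
  rw [increments_apply]
  have key : ∀ j : Fin (n + 1),
      Fin.snoc (α := fun _ => ℝ) v b j = bc (n + 1) b v ((j : ℕ) + 1) := by
    intro j
    by_cases hj : (j : ℕ) < n
    · simp [bc, Fin.snoc, hj, Fin.castLT]
    · simp [bc, Fin.snoc, hj]
  rw [key]
  split_ifs with h
  · rw [h, bc_zero]
  · rw [key]
    congr 2
    simp only
    omega

lemma sum_increments_snoc (n : ℕ) (b : ℝ) (v : Fin n → ℝ) :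
    ∑ i, increments (n + 1) (Fin.snoc (α := fun _ => ℝ) v b) i = b := by
  simp only [increments_snoc]
  rw [Fin.sum_univ_eq_sum_range (fun i => bc (n + 1) b v (i + 1) - bc (n + 1) b v i),
    Finset.sum_range_sub, bc_zero, bc_last, sub_zero]

lemma chainE_eq (φ : ℕ → ℝ → ℝ) (n : ℕ) (b : ℝ) (v : Fin n → ℝ) :
    chainE φ (n + 1) b v
      = ∑ i : Fin (n + 1), φ (i + 1) (increments (n + 1) (Fin.snoc (α := fun _ => ℝ) v b) i) := by
  simp only [increments_snoc, chainE]
  rw [Fin.sum_univ_eq_sum_range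
    (fun i => φ (i + 1) (bc (n + 1) b v (i + 1) - bc (n + 1) b v i))]

/-- Splitting off the last bond, the only one that feels the right boundary value. -/
lemma chainE_eq_add (φ : ℕ → ℝ → ℝ) (n : ℕ) (b : ℝ) (v : Fin n → ℝ) :
    chainE φ (n + 1) b v
      = ∑ i : Fin n, φ (i + 1) (increments n v i) + φ (n + 1) (b - bc (n + 1) b v n) := by
  rw [chainE, Finset.sum_range_succ, bc_last,
    ← Fin.sum_univ_eq_sum_range
      (fun i => φ (i + 1) (bc (n + 1) b v (i + 1) - bc (n + 1) b v i))]
  congr 1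
  refine Finset.sum_congr rfl fun i _ => ?_
  have hi := i.2
  rw [increments_apply]
  congr 2
  · simp [bc]
  · by_cases h : (i : ℕ) = 0
    · simp [h, bc]
    · have h1 : 0 < (i : ℕ) := by omega
      have h2 : (i : ℕ) < n + 1 := by omega
      simp [h, bc, h1, h2]

lemma continuous_bc (n i : ℕ) :
    Continuous fun q : ℝ × (Fin n → ℝ) => bc (n + 1) q.1 q.2 i := by
  unfold bc
  split_ifs <;> fun_prop

lemma continuous_chainE {φ : ℕ → ℝ → ℝ} (hφ : ∀ i, Continuous (φ i)) (n : ℕ) :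
    Continuous fun q : ℝ × (Fin n → ℝ) => chainE φ (n + 1) q.1 q.2 := by
  unfold chainE
  refine continuous_finsetSum _ fun i _ => (hφ _).comp ?_
  exact (continuous_bc n _).sub (continuous_bc n _)

/-- A majorant of the Boltzmann weight that is uniform in the boundary value: the last bond is
bounded below, and the remaining ones factorise in the increment variables. -/
lemma exists_chain_majorant {φ : ℕ → ℝ → ℝ} {κ : ℝ} (hκ : 0 < κ) (hC2 : ∀ i, ContDiff ℝ 2 (φ i))
    (hφ'' : ∀ i y, κ ≤ deriv (deriv (φ i)) y) (n : ℕ) :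
    ∃ G : (Fin n → ℝ) → ℝ, Integrable G ∧
      ∀ b v, Real.exp (-(chainE φ (n + 1) b v)) ≤ G v := by
  obtain ⟨C, hC⟩ := exists_quadratic_lower_bound hκ (hC2 (n + 1)) (hφ'' (n + 1)) 0
  refine ⟨fun v => Real.exp C * ∏ i : Fin n, Real.exp (-φ (i + 1) (increments n v i)), ?_, ?_⟩
  · have h : Integrable fun x : Fin n → ℝ => ∏ i : Fin n, Real.exp (-φ (i + 1) (x i)) :=
      Integrable.fintype_prod_dep (f := fun (i : Fin n) y => Real.exp (-φ (i + 1) y)) fun i => by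
        simpa using integrable_exp_tilt hκ (hC2 (i + 1)) (hφ'' (i + 1)) 0
    exact ((measurePreserving_increments n).integrable_comp_of_integrable h).const_mul _
  · intro b v
    beta_reduce
    rw [← Real.exp_sum, ← Real.exp_add, chainE_eq_add, Finset.sum_neg_distrib]
    have h1 := hC (b - bc (n + 1) b v n)
    have h2 : 0 ≤ κ / 4 * (b - bc (n + 1) b v n) ^ 2 := by positivity
    exact Real.exp_le_exp.2 (by linarith)

lemma integrable_chain {φ : ℕ → ℝ → ℝ} {κ : ℝ} (hκ : 0 < κ) (hC2 : ∀ i, ContDiff ℝ 2 (φ i))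
    (hφ'' : ∀ i y, κ ≤ deriv (deriv (φ i)) y) (n : ℕ) (b : ℝ) :
    Integrable fun v : Fin n → ℝ => Real.exp (-(chainE φ (n + 1) b v)) := by
  obtain ⟨G, hG, hle⟩ := exists_chain_majorant hκ hC2 hφ'' n
  refine hG.mono' ?_ (Eventually.of_forall fun v => ?_)
  · have := (continuous_chainE (fun i => (hC2 i).continuous) n).comp
      (by fun_prop : Continuous fun v : Fin n → ℝ => (b, v))
    exact (Real.continuous_exp.comp this.neg).aestronglyMeasurable
  · rw [Real.norm_of_nonneg (Real.exp_pos _).le]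
    exact hle b v

lemma continuous_chain_integral {φ : ℕ → ℝ → ℝ} {κ : ℝ} (hκ : 0 < κ)
    (hC2 : ∀ i, ContDiff ℝ 2 (φ i)) (hφ'' : ∀ i y, κ ≤ deriv (deriv (φ i)) y) (n : ℕ) :
    Continuous fun b => ∫ v : Fin n → ℝ, Real.exp (-(chainE φ (n + 1) b v)) := by
  obtain ⟨G, hG, hle⟩ := exists_chain_majorant hκ hC2 hφ'' n
  refine continuous_of_dominated (bound := G)
    (fun b => (integrable_chain hκ hC2 hφ'' n b).aestronglyMeasurable)
    (fun b => Eventually.of_forall fun v => ?_) hG (Eventually.of_forall fun v => ?_)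
  · rw [Real.norm_of_nonneg (Real.exp_pos _).le]
    exact hle b v
  · have := (continuous_chainE (fun i => (hC2 i).continuous) n).comp
      (by fun_prop : Continuous fun b : ℝ => (b, v))
    exact Real.continuous_exp.comp this.neg

/-! ### The law of the sum -/

/-- Integration over all increments is integration over the end point `s` of the chain and over
its interior positions `v`. -/
lemma lintegral_increments (n : ℕ) {F : (Fin (n + 1) → ℝ) → ENNReal} (hF : Measurable F) :
    ∫⁻ x, F x = ∫⁻ s : ℝ, ∫⁻ v : Fin n → ℝ,
      F (increments (n + 1) (Fin.snoc (α := fun _ => ℝ) v s)) := by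
  have hD := measurePreserving_increments (n + 1)
  have hS := (volume_preserving_piFinSuccAbove (fun _ : Fin (n + 1) => ℝ) (Fin.last n)).symm
  have hFD : Measurable fun u => F (increments (n + 1) u) := hF.comp hD.measurable
  rw [← hD.lintegral_comp hF, ← hS.lintegral_comp hFD, Measure.volume_eq_prod, lintegral_prod]
  · simp only [MeasurableEquiv.piFinSuccAbove, MeasurableEquiv.symm_mk, MeasurableEquiv.coe_mk,
      Fin.insertNthEquiv_last]
    rfl
  · exact (hFD.comp hS.measurable).aemeasurable

/-- Under the product of the Gibbs measures, the sum of the increments has density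
`(∏ Zᵢ)⁻¹ exp(σ s) ∫ exp(-chainE)` at `s`. -/
lemma lintegral_sum_gibbs {φ : ℕ → ℝ → ℝ} {κ : ℝ} (hκ : 0 < κ) (hC2 : ∀ i, ContDiff ℝ 2 (φ i))
    (hφ'' : ∀ i y, κ ≤ deriv (deriv (φ i)) y) (n : ℕ) (σ : ℝ) {F : ℝ → ENNReal}
    (hF : Measurable F) :
    ∫⁻ x, F (∑ i, x i) ∂(Measure.pi fun i : Fin (n + 1) => gibbs (φ ((i : ℕ) + 1)) σ)
      = ∫⁻ s : ℝ, F s * ENNReal.ofReal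
          ((∏ i : Fin (n + 1), ∫ z : ℝ, Real.exp (σ * z - φ (i + 1) z))⁻¹ * Real.exp (σ * s)
            * ∫ v : Fin n → ℝ, Real.exp (-(chainE φ (n + 1) s v))) := by
  set Z : Fin (n + 1) → ℝ := fun i => ∫ z : ℝ, Real.exp (σ * z - φ (i + 1) z) with hZ
  have hI : ∀ i : Fin (n + 1), Integrable fun y => Real.exp (σ * y - φ (i + 1) y) :=
    fun i => integrable_exp_tilt hκ (hC2 _) (hφ'' _) σ
  have hZpos : ∀ i, 0 < Z i := fun i => integral_exp_pos (hI i)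
  have hφc : ∀ i, Continuous (φ i) := fun i => (hC2 i).continuous
  have hc : Continuous fun x : Fin (n + 1) → ℝ =>
      ∏ i : Fin (n + 1), (Z i)⁻¹ * Real.exp (σ * x i - φ (i + 1) (x i)) := by fun_prop
  have hm : Measurable fun x : Fin (n + 1) → ℝ => ENNReal.ofReal
      (∏ i : Fin (n + 1), (Z i)⁻¹ * Real.exp (σ * x i - φ (i + 1) (x i))) :=
    hc.measurable.ennreal_ofReal
  have hFs : Measurable fun x : Fin (n + 1) → ℝ => F (∑ i, x i) := hF.comp (by fun_prop)
  unfold gibbs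
  rw [pi_withDensity_ofReal (fun (i : Fin (n + 1)) y => (Z i)⁻¹ * Real.exp (σ * y - φ (i + 1) y))
    (fun i => (hI i).const_mul _)
    (fun i y => mul_nonneg (inv_nonneg.2 (hZpos i).le) (Real.exp_pos _).le),
    lintegral_withDensity_eq_lintegral_mul _ hm hFs, lintegral_increments n (hm.mul hFs)]
  refine lintegral_congr fun s => ?_
  have hval : ∀ v : Fin n → ℝ,
      (∏ i : Fin (n + 1), (Z i)⁻¹ *
        Real.exp (σ * increments (n + 1) (Fin.snoc (α := fun _ => ℝ) v s) i
          - φ (i + 1) (increments (n + 1) (Fin.snoc (α := fun _ => ℝ) v s) i)))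
      = (∏ i, Z i)⁻¹ * Real.exp (σ * s) * Real.exp (-(chainE φ (n + 1) s v)) := by
    intro v
    rw [Finset.prod_mul_distrib, Finset.prod_inv_distrib, ← Real.exp_sum, Finset.sum_sub_distrib,
      ← Finset.mul_sum, sum_increments_snoc, ← chainE_eq, sub_eq_add_neg, Real.exp_add, mul_assoc]
  have hIc := (integrable_chain hκ hC2 hφ'' n s).const_mul ((∏ i, Z i)⁻¹ * Real.exp (σ * s))
  have hZ0 : 0 ≤ (∏ i, Z i)⁻¹ := inv_nonneg.2 (Finset.prod_nonneg fun i _ => (hZpos i).le)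
  simp only [Pi.mul_apply, sum_increments_snoc, hval]
  rw [lintegral_mul_const'' _ hIc.1.aemeasurable.ennreal_ofReal, mul_comm,
    ← ofReal_integral_eq_lintegral_ofReal hIc (Eventually.of_forall fun v => by positivity),
    integral_const_mul]

/-! ### The saddle point and the identity -/

/-- First-order optimality of `σ`: the Gibbs means average to `A`. -/
lemma sum_gibbsMean_eq {φ : ℕ → ℝ → ℝ} {κ : ℝ} (hκ : 0 < κ) (hC2 : ∀ i, ContDiff ℝ 2 (φ i))
    (hφ'' : ∀ i y, κ ≤ deriv (deriv (φ i)) y) {N : ℕ} (hN : N ≠ 0) {A σ₀ : ℝ}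
    (hmax : ∀ σ : ℝ,
      σ * A - (N : ℝ)⁻¹ * ∑ i ∈ Finset.Icc 1 N,
          Real.log (∫ y : ℝ, Real.exp (-φ i y + σ * y)) ≤
      σ₀ * A - (N : ℝ)⁻¹ * ∑ i ∈ Finset.Icc 1 N,
          Real.log (∫ y : ℝ, Real.exp (-φ i y + σ₀ * y))) :
    ∑ i ∈ Finset.Icc 1 N, gibbsMean (φ i) σ₀ = N * A := by
  have hd := ((hasDerivAt_id σ₀).mul_const A).sub ((HasDerivAt.fun_sum
    fun i (_ : i ∈ Finset.Icc 1 N) =>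
      hasDerivAt_log_partition hκ (hC2 i) (hφ'' i) σ₀).const_mul (N : ℝ)⁻¹)
  have h0 := IsLocalMax.hasDerivAt_eq_zero (Eventually.of_forall hmax) hd
  have hN' : (N : ℝ) ≠ 0 := Nat.cast_ne_zero.2 hN
  field_simp at h0
  linarith

/-- Lebesgue measure scales by `r` under `t = r⁻¹ (s - a)`. -/
lemma lintegral_rescale {r : ℝ} (hr : 0 < r) (a : ℝ) {k : ℝ → ENNReal} (hk : Measurable k) :
    ∫⁻ s, k (r⁻¹ * (s - a)) = ENNReal.ofReal r * ∫⁻ t, k t := by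
  rw [lintegral_sub_right_eq_self (fun s => k (r⁻¹ * s)) a,
    ← lintegral_map (f := k) (g := fun s => r⁻¹ * s) hk (by fun_prop),
    Real.map_volume_mul_left (inv_ne_zero hr.ne'), inv_inv, abs_of_pos hr, lintegral_smul_measure,
    smul_eq_mul]

/-- The value at `0` of the continuous density of the rescaled centred sum, in terms of the chain
partition function. -/
lemma density_zero_eq {φ : ℕ → ℝ → ℝ} {κ : ℝ} (hκ : 0 < κ) (hC2 : ∀ i, ContDiff ℝ 2 (φ i))
    (hφ'' : ∀ i y, κ ≤ deriv (deriv (φ i)) y) (n : ℕ) (σ a r : ℝ) (hr : 0 < r) {g : ℝ → ℝ}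
    (hgcont : Continuous g)
    (hg : Measure.map (fun x : Fin (n + 1) → ℝ => r⁻¹ * (∑ i, x i - a))
        (Measure.pi fun i : Fin (n + 1) => gibbs (φ ((i : ℕ) + 1)) σ)
      = volume.withDensity fun t => ENNReal.ofReal (g t)) :
    g 0 = r * ((∏ i : Fin (n + 1), ∫ z : ℝ, Real.exp (σ * z - φ (i + 1) z))⁻¹ * Real.exp (σ * a)
            * ∫ v : Fin n → ℝ, Real.exp (-(chainE φ (n + 1) a v))) := by
  set Z : ℝ := ∏ i : Fin (n + 1), ∫ z : ℝ, Real.exp (σ * z - φ (i + 1) z) with hZ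
  have hZpos : 0 < Z := Finset.prod_pos fun i _ =>
    integral_exp_pos (integrable_exp_tilt hκ (hC2 _) (hφ'' _) σ)
  set H : ℝ → ℝ := fun s => Z⁻¹ * Real.exp (σ * s)
    * ∫ v : Fin n → ℝ, Real.exp (-(chainE φ (n + 1) s v)) with hH
  have hHc : Continuous H := by
    have := continuous_chain_integral hκ hC2 hφ'' n
    fun_prop
  have hHpos : ∀ s, 0 < H s := fun s =>
    mul_pos (mul_pos (inv_pos.2 hZpos) (Real.exp_pos _))
      (integral_exp_pos (integrable_chain hκ hC2 hφ'' n s))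
  have hdens : (volume.withDensity fun t => ENNReal.ofReal (g t))
      = volume.withDensity fun t => ENNReal.ofReal (r * H (r * t + a)) := by
    rw [← hg]
    ext B hB
    have hT : Measurable fun s : ℝ => r⁻¹ * (s - a) := by fun_prop
    have hind : Measurable (B.indicator (1 : ℝ → ENNReal)) := measurable_one.indicator hB
    have hk : Measurable fun t => B.indicator (1 : ℝ → ENNReal) t
        * ENNReal.ofReal (H (r * t + a)) :=
      hind.mul (hHc.comp (by fun_prop)).measurable.ennreal_ofReal
    rw [← lintegral_indicator_one hB, lintegral_map hind (by fun_prop),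
      lintegral_sum_gibbs hκ hC2 hφ'' n σ
        (F := fun s => B.indicator (1 : ℝ → ENNReal) (r⁻¹ * (s - a))) (hind.comp hT), withDensity_apply _ hB,
      ← lintegral_indicator hB]
    have h1 : ∀ s, r * (r⁻¹ * (s - a)) + a = s := fun s => by field_simp; ring
    have h2 := lintegral_rescale hr a hk
    simp only [h1] at h2
    refine h2.trans ?_
    rw [← lintegral_const_mul _ hk]
    refine lintegral_congr fun t => ?_
    by_cases ht : t ∈ B
    · simp [ht, ENNReal.ofReal_mul hr.le]
    · simp [ht]
  have hae := (withDensity_eq_iff_of_sigmaFinite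
    hgcont.measurable.ennreal_ofReal.aemeasurable
    (by fun_prop : Continuous fun t => r * H (r * t + a)).measurable.ennreal_ofReal.aemeasurable).1
    hdens
  have heq := (Continuous.ae_eq_iff_eq volume (ENNReal.continuous_ofReal.comp hgcont)
    (ENNReal.continuous_ofReal.comp
      (by fun_prop : Continuous fun t => r * H (r * t + a)))).1 hae
  have h0 : ENNReal.ofReal (g 0) = ENNReal.ofReal (r * H a) := by
    simpa using congrFun heq 0
  have hpos : 0 < r * H a := mul_pos hr (hHpos a)
  -- `ofReal` forgets the sign of `g`; strict positivity of the computed density restores it at `0`.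
  have hg0 : 0 < g 0 := by
    rw [← ENNReal.ofReal_pos, h0]
    exact ENNReal.ofReal_pos.2 hpos
  exact (ENNReal.ofReal_eq_ofReal_iff hg0.le hpos.le).1 h0

/-- `F̃_N(A) = (1/2) log N + N W̃_N(A) - log g̃_{N,A}(0)`. -/
theorem free_energy_density_identity
    (N : ℕ) (hN : 2 ≤ N) (φ : ℕ → ℝ → ℝ) (κ₁ κ₂ : ℝ)
    (hκ₁ : 0 < κ₁) (hκ : κ₁ ≤ κ₂)
    (hC2 : ∀ i, ContDiff ℝ 2 (φ i))
    (hφ'' : ∀ i, ∀ y : ℝ, κ₁ ≤ deriv (deriv (φ i)) y ∧ deriv (deriv (φ i)) y ≤ κ₂)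
    (A σstar : ℝ)
    (hmax : ∀ σ : ℝ,
      σ * A - (N : ℝ)⁻¹ * ∑ i ∈ Finset.Icc 1 N,
          Real.log (∫ y : ℝ, Real.exp (-φ i y + σ * y)) ≤
      σstar * A - (N : ℝ)⁻¹ * ∑ i ∈ Finset.Icc 1 N,
          Real.log (∫ y : ℝ, Real.exp (-φ i y + σstar * y)))
    (g : ℝ → ℝ) (hgcont : Continuous g)
    (hg : Measure.map
        (fun x : Fin N → ℝ =>
          (Real.sqrt N)⁻¹ * ∑ i, (x i - gibbsMean (φ ((i : ℕ) + 1)) σstar))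
        (Measure.pi fun i : Fin N => gibbs (φ ((i : ℕ) + 1)) σstar)
      = volume.withDensity fun t => ENNReal.ofReal (g t)) :
    freeEnergyTilde φ N A =
      (1 / 2 : ℝ) * Real.log N + N * WNtilde φ N A - Real.log (g 0) := by
  have hlow : ∀ i y, κ₁ ≤ deriv (deriv (φ i)) y := fun i y => (hφ'' i y).1
  have hmean := sum_gibbsMean_eq hκ₁ hC2 hlow (by omega : N ≠ 0) hmax
  have hW : WNtilde φ N A = σstar * A - (N : ℝ)⁻¹ * ∑ i ∈ Finset.Icc 1 N,
      Real.log (∫ y : ℝ, Real.exp (-φ i y + σstar * y)) :=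
    le_antisymm (ciSup_le hmax) (le_ciSup (f := fun σ : ℝ => σ * A - (N : ℝ)⁻¹ *
      ∑ i ∈ Finset.Icc 1 N, Real.log (∫ y : ℝ, Real.exp (-φ i y + σ * y)))
      ⟨_, Set.forall_mem_range.2 hmax⟩ σstar)
  obtain ⟨n, rfl⟩ : ∃ n, N = n + 1 := ⟨N - 1, by omega⟩
  have hNpos : (0 : ℝ) < ((n + 1 : ℕ) : ℝ) := by positivity
  have hshift : ∀ h : ℕ → ℝ, ∑ i ∈ Finset.Icc 1 (n + 1), h i = ∑ i : Fin (n + 1), h (i + 1) := by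
    intro h
    rw [Fin.sum_univ_eq_sum_range (fun i => h (i + 1)), Finset.range_eq_Ico,
      Finset.sum_Ico_add' h 0 (n + 1) 1]
    rfl
  rw [hshift] at hmean
  have hg' : Measure.map
      (fun x : Fin (n + 1) → ℝ => (√((n + 1 : ℕ) : ℝ))⁻¹ * (∑ i, x i - (n + 1 : ℕ) * A))
        (Measure.pi fun i : Fin (n + 1) => gibbs (φ ((i : ℕ) + 1)) σstar)
      = volume.withDensity fun t => ENNReal.ofReal (g t) := by
    rw [← hg]
    simp only [Finset.sum_sub_distrib, hmean]
  have hZpos : ∀ i : Fin (n + 1), 0 < ∫ z : ℝ, Real.exp (σstar * z - φ (i + 1) z) := fun i =>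
    integral_exp_pos (integrable_exp_tilt hκ₁ (hC2 _) (hlow _) σstar)
  have hEpos : 0 < ∫ v : Fin n → ℝ, Real.exp (-(chainE φ (n + 1) ((n + 1 : ℕ) * A) v)) :=
    integral_exp_pos (integrable_chain hκ₁ hC2 hlow n _)
  have hprod := Finset.prod_pos fun i (_ : i ∈ Finset.univ) => hZpos i
  have hsqrt : 0 < √((n + 1 : ℕ) : ℝ) := Real.sqrt_pos.2 hNpos
  have e : ∀ (i : ℕ) (y : ℝ), -φ i y + σstar * y = σstar * y - φ i y := fun i y => by ring
  rw [density_zero_eq hκ₁ hC2 hlow n σstar _ _ hsqrt hgcont hg', Real.log_mul hsqrt.ne'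
    (by positivity), Real.log_mul (by positivity) hEpos.ne', Real.log_mul (by positivity)
    (Real.exp_pos _).ne', Real.log_inv, Real.log_exp, Real.log_prod fun i _ => (hZpos i).ne',
    Real.log_sqrt hNpos.le, hW, hshift]
  have hF : freeEnergyTilde φ (n + 1) A
      = -Real.log (∫ v : Fin n → ℝ, Real.exp (-(chainE φ (n + 1) ((n + 1 : ℕ) * A) v))) := rfl
  simp only [e, hF]
  field_simp
  ring
end
end
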